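/- Let ν be a radial weight in D̂. Then there exists a radial weight ω such that P_ω : L^∞_ν̂ → H^∞_ν̂ is bounded if and only if ν ∈ Ď. In particular, if ν ∈ D̂ \ Ď, then for every radial weight ω the projection P_ω is not bounded from L^∞_ν̂ to H^∞_ν̂. -/

import Mathlib

open MeasureTheory Set Complex
open scoped ENNReal

noncomputable section

/-- The open unit disc in the complex plane. -/
def unitDisc : Set ℂ := Metric.ball 0 1

/-- Tail integral `ω̂(r) = ∫_r^1 ω(s) ds`. -/
def tl (ω : ℝ → ℝ) (r : ℝ) : ℝ := ∫ s in r..1, ω s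

/-- Moment `ω_x = ∫_0^1 s^x ω(s) ds` (real power in the exponent). -/
def mom (ω : ℝ → ℝ) (x : ℝ) : ℝ := ∫ s in (0:ℝ)..1, s ^ x * ω s

/-- `ω` is a radial weight: nonnegative and integrable on `[0,1)`, with positive
tail integrals. -/
def IsRadialWeight (ω : ℝ → ℝ) : Prop :=
  (∀ s ∈ Ico (0:ℝ) 1, 0 ≤ ω s) ∧ IntegrableOn ω (Ico (0:ℝ) 1) ∧
    ∀ r ∈ Ico (0:ℝ) 1, 0 < tl ω r

/-- The upper doubling class `D̂`: `sup_{0≤r<1} ω̂(r)/ω̂((1+r)/2) < ∞`. -/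
def Dhat (ω : ℝ → ℝ) : Prop :=
  ∃ C : ℝ, ∀ r ∈ Ico (0:ℝ) 1, tl ω r ≤ C * tl ω ((1 + r) / 2)

/-- The class `Ď`: there are `K > 1`, `C > 1` with `ω̂(r) ≥ C ω̂(1 - (1-r)/K)`. -/
def Dcheck (ω : ℝ → ℝ) : Prop :=
  ∃ K C : ℝ, 1 < K ∧ 1 < C ∧ ∀ r ∈ Ico (0:ℝ) 1, C * tl ω (1 - (1 - r) / K) ≤ tl ω r

/-- The class `D = D̂ ∩ Ď`. -/
def DD (ω : ℝ → ℝ) : Prop := Dhat ω ∧ Dcheck ω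

/-- The Bergman reproducing kernel `B^ω_z(ζ) = Σ_n (conj z · ζ)^n / (2 ω_{2n+1})`. -/
def bKer (ω : ℝ → ℝ) (z ζ : ℂ) : ℂ :=
  ∑' n : ℕ, (starRingEnd ℂ z * ζ) ^ n / ((2 * mom ω (2 * (n : ℝ) + 1) : ℝ) : ℂ)

/-- The integrand of the Bergman projection. -/
def bInt (ω : ℝ → ℝ) (f : ℂ → ℂ) (z ζ : ℂ) : ℂ :=
  f ζ * starRingEnd ℂ (bKer ω z ζ) * ((ω ‖ζ‖ : ℝ) : ℂ)

/-- The Bergman projection `P_ω f(z) = ∫_𝔻 f(ζ) conj(B^ω_z(ζ)) ω(ζ) dA(ζ)`,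
where `dA` is normalized area measure `dx dy / π`. -/
def bProj (ω : ℝ → ℝ) (f : ℂ → ℂ) (z : ℂ) : ℂ :=
  (Real.pi : ℂ)⁻¹ * ∫ ζ in unitDisc, bInt ω f z ζ

/-- The weighted sup-norm `ess sup_{z ∈ 𝔻} |f(z)| v(|z|)`, valued in `ℝ≥0∞`. -/
def wSup (v : ℝ → ℝ) (f : ℂ → ℂ) : ℝ≥0∞ :=
  essSup (fun z => ENNReal.ofReal (‖f z‖ * v ‖z‖)) (volume.restrict unitDisc)

/-- `P_ω : L^∞_v → H^∞_v` is bounded: there is `C > 0` so that for every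
`f ∈ L^∞_v` the defining integral converges absolutely at every point of `𝔻`,
`P_ω f` is analytic on `𝔻`, and `‖P_ω f‖_{L^∞_v} ≤ C ‖f‖_{L^∞_v}`. -/
def ProjBddH (ω v : ℝ → ℝ) : Prop :=
  ∃ C : ℝ, 0 < C ∧ ∀ f : ℂ → ℂ,
    AEStronglyMeasurable f (volume.restrict unitDisc) → wSup v f < ⊤ →
    (∀ z ∈ unitDisc, IntegrableOn (bInt ω f z) unitDisc) ∧
    DifferentiableOn ℂ (bProj ω f) unitDisc ∧
    wSup v (bProj ω f) ≤ ENNReal.ofReal C * wSup v f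

/-- `P_ω : L^∞_v → B^∞_v` is bounded: there is `C > 0` so that for every
`f ∈ L^∞_v` the defining integral converges absolutely at every point of `𝔻`,
`P_ω f` is analytic on `𝔻`, and `‖P_ω f‖_{B^∞_v} ≤ C ‖f‖_{L^∞_v}`. -/
def ProjBddB (ω v : ℝ → ℝ) : Prop :=
  ∃ C : ℝ, 0 < C ∧ ∀ f : ℂ → ℂ,
    AEStronglyMeasurable f (volume.restrict unitDisc) → wSup v f < ⊤ →
    (∀ z ∈ unitDisc, IntegrableOn (bInt ω f z) unitDisc) ∧
    DifferentiableOn ℂ (bProj ω f) unitDisc ∧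
    ∀ z ∈ unitDisc,
      ENNReal.ofReal ((1 - ‖z‖) * v ‖z‖ * ‖deriv (bProj ω f) z‖) ≤
        ENNReal.ofReal C * wSup v f

/-- The moment condition `sup_{x ≥ 0} (ν_x / ω_{2x}) (ω/ν̂)_x < ∞`. -/
def MomCond (ω ν : ℝ → ℝ) : Prop :=
  ∃ C : ℝ, ∀ x : ℝ, 0 ≤ x →
    mom ν x / mom ω (2 * x) * mom (fun s => ω s / tl ν s) x ≤ C

/-- The tail condition `sup_{0 ≤ r < 1} (ν̂(r)/ω̂(r)) ∫_r^1 ω(s)/ν̂(s) ds < ∞`. -/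
def TailCond (ω ν : ℝ → ℝ) : Prop :=
  ∃ C : ℝ, ∀ r ∈ Ico (0:ℝ) 1, tl ν r / tl ω r * tl (fun s => ω s / tl ν s) r ≤ C

/-!
Every upper doubling `ν` satisfies `ν̂(r) ≤ (2(1 - r)/(1 - t))^m ν̂(t)` for `r ≤ t`, and membership
in `Ď` adds a decay `ν̂(t) ≲ ((1 - t)/(1 - r))^α ν̂(r)`. With both bounds the standard weight
`ω(z) = (1 - |z|²)^N`, for `N` large, works: its kernel is a multiple of `(1 - z̄ζ)^{-(N + 2)}`, and
the Forelli–Rudin estimates bound `∫ |B^ω_z| (ω/ν̂) dA` by a constant multiple of `1/ν̂(z)`.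

Conversely, if `P_ω` is bounded, test it on `f(ζ) = -i arg ζ / ν̂(ζ)`. At `z = -r` the projection is
`∑ r^n/n · (ω/ν̂)_{n+1}/ω_{2n+1}`. Upper doubling makes the `n`-th moment ratio `≳ 1/ν̂(ρ)` once
`n ≥ 1/(1 - ρ)`. For `r = 1 - (1 - ρ)/(4L)` the terms with `1/(1 - ρ) ≤ n < L/(1 - ρ)` already sum
to `≳ log L / ν̂(ρ)`, so boundedness yields `ν̂(r) log L ≲ ν̂(ρ)`, and a large `L` gives `ν ∈ Ď`.
-/

section

open scoped Real ComplexConjugate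

section Doubling

variable {φ : ℝ → ℝ}

lemma pow_mul_apply_div_pow_le {K c : ℝ} (hK : 1 ≤ K) (hc : 0 ≤ c)
    (h : ∀ x ∈ Ioc (0 : ℝ) 1, c * φ (x / K) ≤ φ x) {x : ℝ} (hx : x ∈ Ioc (0 : ℝ) 1) (j : ℕ) :
    c ^ j * φ (x / K ^ j) ≤ φ x := by
  induction j with
  | zero => simp
  | succ j ih =>
    have hmem : x / K ^ j ∈ Ioc (0 : ℝ) 1 :=
      ⟨div_pos hx.1 (by positivity), (div_le_self hx.1.le (one_le_pow₀ hK)).trans hx.2⟩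
    calc c ^ (j + 1) * φ (x / K ^ (j + 1)) = c ^ j * (c * φ (x / K ^ j / K)) := by
          rw [pow_succ, pow_succ, div_mul_eq_div_div, mul_assoc]
      _ ≤ c ^ j * φ (x / K ^ j) := by gcongr; exact h _ hmem
      _ ≤ φ x := ih

lemma exists_apply_le_pow_mul_of_doubling (hmono : MonotoneOn φ (Ioc 0 1))
    (hφ : ∀ x ∈ Ioc (0 : ℝ) 1, 0 ≤ φ x) {C : ℝ}
    (h : ∀ x ∈ Ioc (0 : ℝ) 1, φ x ≤ C * φ (x / 2)) :
    ∃ m : ℕ, 1 ≤ m ∧ ∀ x y : ℝ, 0 < x → x ≤ y → y ≤ 1 → φ y ≤ (2 * (y / x)) ^ m * φ x := by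
  obtain ⟨m, hm⟩ := pow_unbounded_of_one_lt (max C 1) (one_lt_two : (1 : ℝ) < 2)
  refine ⟨m, Nat.one_le_iff_ne_zero.2 fun h0 => ?_, fun x y hx hxy hy => ?_⟩
  · exact ((le_max_right C 1).trans_lt hm).ne' (by rw [h0, pow_zero])
  have hyx : 1 ≤ y / x := (one_le_div hx).2 hxy
  obtain ⟨j, hj, hj'⟩ := exists_nat_pow_near hyx (one_lt_two : (1 : ℝ) < 2)
  have hymem : y ∈ Ioc (0 : ℝ) 1 := ⟨hx.trans_le hxy, hy⟩
  have hxmem : x ∈ Ioc (0 : ℝ) 1 := ⟨hx, hxy.trans hy⟩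
  have hjx : y / 2 ^ (j + 1) ≤ x := by
    rw [div_lt_iff₀ hx] at hj'
    rw [div_le_iff₀ (by positivity)]
    linarith
  have hjmem : y / 2 ^ (j + 1) ∈ Ioc (0 : ℝ) 1 :=
    ⟨div_pos hymem.1 (by positivity), hjx.trans hxmem.2⟩
  have hstep : ∀ t ∈ Ioc (0 : ℝ) 1, 2 ^ m * -φ (t / 2) ≤ -φ t := fun t ht => by
    have ht2 : t / 2 ∈ Ioc (0 : ℝ) 1 := ⟨half_pos ht.1, by linarith [ht.1, ht.2]⟩
    have := mul_le_mul_of_nonneg_right ((le_max_left C 1).trans hm.le) (hφ _ ht2)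
    linarith [h t ht]
  have hiter := pow_mul_apply_div_pow_le (φ := -φ) one_le_two (by positivity) hstep hymem (j + 1)
  calc φ y ≤ (2 ^ m) ^ (j + 1) * φ (y / 2 ^ (j + 1)) := by
        simpa only [Pi.neg_apply, mul_neg, neg_le_neg_iff] using hiter
    _ ≤ (2 ^ m) ^ (j + 1) * φ x := by gcongr; exact hmono hjmem hxmem hjx
    _ = (2 * 2 ^ j) ^ m * φ x := by rw [pow_right_comm, pow_succ']
    _ ≤ (2 * (y / x)) ^ m * φ x := by have := hφ x hxmem; gcongr

lemma exists_apply_le_rpow_mul_of_reverse_doubling (hmono : MonotoneOn φ (Ioc 0 1))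
    (hφ : ∀ x ∈ Ioc (0 : ℝ) 1, 0 ≤ φ x) {K C : ℝ} (hK : 1 < K) (hC : 1 < C)
    (h : ∀ x ∈ Ioc (0 : ℝ) 1, C * φ (x / K) ≤ φ x) :
    ∃ α : ℝ, 0 < α ∧ α ≤ 1 ∧ ∀ x y : ℝ, 0 < x → x ≤ y → y ≤ 1 →
      φ x ≤ C * (x / y) ^ α * φ y := by
  have hlogK := Real.log_pos hK
  set α := min 1 (Real.log C / Real.log K)
  have hα : 0 < α := lt_min one_pos (div_pos (Real.log_pos hC) hlogK)
  have hKα : K ^ α ≤ C := by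
    rw [Real.rpow_le_iff_le_log (by positivity) (by positivity), ← le_div_iff₀ hlogK]
    exact min_le_right _ _
  refine ⟨α, hα, min_le_left _ _, ?_⟩
  intro x y hx hxy hy
  have hy0 : 0 < y := hx.trans_le hxy
  obtain ⟨j, hj, hj'⟩ := exists_nat_pow_near ((one_le_div hx).2 hxy) hK
  have hxj : x ≤ y / K ^ j := by
    rw [le_div_iff₀ hx] at hj
    rw [le_div_iff₀ (by positivity)]
    linarith
  have hjmem : y / K ^ j ∈ Ioc (0 : ℝ) 1 :=
    ⟨by positivity, (div_le_self hy0.le (one_le_pow₀ hK.le)).trans hy⟩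
  have hiter : C ^ j * φ x ≤ φ y :=
    (mul_le_mul_of_nonneg_left (hmono ⟨hx, hxy.trans hy⟩ hjmem hxj) (by positivity)).trans
      (pow_mul_apply_div_pow_le hK.le (by positivity) h ⟨hy0, hy⟩ j)
  have hpow : (y / x) ^ α ≤ C * C ^ j := calc
    (y / x) ^ α ≤ (K ^ (j + 1)) ^ α := by gcongr
    _ = (K ^ α) ^ (j + 1) := by rw [Real.rpow_pow_comm (by positivity)]
    _ ≤ C * C ^ j := by rw [← pow_succ']; gcongr
  have hinv : (x / y) ^ α * (y / x) ^ α = 1 := by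
    rw [← Real.mul_rpow (by positivity) (by positivity), div_mul_div_cancel₀ hy0.ne',
      div_self hx.ne', Real.one_rpow]
  calc φ x = (x / y) ^ α * (y / x) ^ α * φ x := by rw [hinv, one_mul]
    _ ≤ (x / y) ^ α * (C * C ^ j) * φ x := by
        have := hφ x ⟨hx, hxy.trans hy⟩
        gcongr
    _ = C * (x / y) ^ α * (C ^ j * φ x) := by ring
    _ ≤ C * (x / y) ^ α * φ y := by gcongr

end Doubling

section RadialWeight

variable {ω ν : ℝ → ℝ}

lemma IsRadialWeight.intervalIntegrable (h : IsRadialWeight ω) {a b : ℝ} (ha : a ∈ Icc (0 : ℝ) 1)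
    (hb : b ∈ Icc (0 : ℝ) 1) : IntervalIntegrable ω volume a b := by
  have hIcc : IntegrableOn ω (uIcc 0 1) := by
    rw [uIcc_of_le zero_le_one, integrableOn_Icc_iff_integrableOn_Ico]
    exact h.2.1
  exact ((intervalIntegrable_iff' (by finiteness)).2 hIcc).mono_set
    (uIcc_subset_uIcc (by rwa [uIcc_of_le zero_le_one]) (by rwa [uIcc_of_le zero_le_one]))

lemma IsRadialWeight.continuousOn_tl (h : IsRadialWeight ω) :
    ContinuousOn (tl ω) (Icc 0 1) := by
  have hint : IntegrableOn ω (uIcc 0 1) :=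
    (intervalIntegrable_iff' (by finiteness)).1 (h.intervalIntegrable (left_mem_Icc.2 zero_le_one)
      (right_mem_Icc.2 zero_le_one))
  rw [← uIcc_of_le (zero_le_one' ℝ)]
  exact intervalIntegral.continuousOn_primitive_interval_left hint

lemma IsRadialWeight.antitoneOn_tl (h : IsRadialWeight ω) : AntitoneOn (tl ω) (Icc 0 1) := by
  intro r hr t ht hrt
  have hone : (1 : ℝ) ∈ Icc (0 : ℝ) 1 := right_mem_Icc.2 zero_le_one
  have hnonneg : 0 ≤ ∫ s in r..t, ω s := by
    rw [intervalIntegral.integral_of_le hrt, integral_Ioc_eq_integral_Ioo]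
    exact setIntegral_nonneg measurableSet_Ioo fun s hs =>
      h.1 s ⟨hr.1.trans hs.1.le, hs.2.trans_le ht.2⟩
  rw [tl, tl, ← intervalIntegral.integral_add_adjacent_intervals (h.intervalIntegrable hr ht)
    (h.intervalIntegrable ht hone)]
  exact le_add_of_nonneg_left hnonneg

lemma IsRadialWeight.monotoneOn_tl_one_sub (h : IsRadialWeight ω) :
    MonotoneOn (fun x => tl ω (1 - x)) (Ioc 0 1) := fun x hx y hy hxy =>
  h.antitoneOn_tl ⟨by linarith [hy.2], by linarith [hy.1]⟩ ⟨by linarith [hx.2], by linarith [hx.1]⟩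
    (by linarith)

lemma IsRadialWeight.tl_one_sub_pos (h : IsRadialWeight ω) {x : ℝ} (hx : x ∈ Ioc (0 : ℝ) 1) :
    0 < tl ω (1 - x) :=
  h.2.2 _ ⟨by linarith [hx.2], by linarith [hx.1]⟩

lemma Dhat.exists_tl_le_pow_mul (hD : Dhat ν) (h : IsRadialWeight ν) :
    ∃ m : ℕ, 1 ≤ m ∧ ∀ r t : ℝ, 0 ≤ r → r ≤ t → t < 1 →
      tl ν r ≤ (2 * ((1 - r) / (1 - t))) ^ m * tl ν t := by
  obtain ⟨C, hC⟩ := hD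
  obtain ⟨m, hm, hle⟩ := exists_apply_le_pow_mul_of_doubling h.monotoneOn_tl_one_sub
    (fun x hx => (h.tl_one_sub_pos hx).le) (C := C) fun x hx => by
      have hmid : (1 + (1 - x)) / 2 = 1 - x / 2 := by ring
      exact hmid ▸ hC (1 - x) ⟨by linarith [hx.2], by linarith [hx.1]⟩
  refine ⟨m, hm, fun r t hr hrt ht => ?_⟩
  simpa only [sub_sub_cancel] using
    hle (1 - t) (1 - r) (by linarith) (by linarith) (by linarith)

lemma Dcheck.exists_tl_le_rpow_mul (hD : Dcheck ν) (h : IsRadialWeight ν) :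
    ∃ C α : ℝ, 0 < C ∧ 0 < α ∧ α ≤ 1 ∧ ∀ r t : ℝ, 0 ≤ r → r ≤ t → t < 1 →
      tl ν t ≤ C * ((1 - t) / (1 - r)) ^ α * tl ν r := by
  obtain ⟨K, C, hK, hC, hKC⟩ := hD
  obtain ⟨α, hα0, hα1, hle⟩ := exists_apply_le_rpow_mul_of_reverse_doubling
    h.monotoneOn_tl_one_sub (fun x hx => (h.tl_one_sub_pos hx).le) hK hC fun x hx => by
      simpa only [sub_sub_cancel] using hKC (1 - x) ⟨by linarith [hx.2], by linarith [hx.1]⟩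
  refine ⟨C, α, one_pos.trans hC, hα0, hα1, fun r t hr hrt ht => ?_⟩
  simpa only [sub_sub_cancel] using
    hle (1 - t) (1 - r) (by linarith) (by linarith) (by linarith)

lemma DD.exists_tl_le (hD : DD ν) (h : IsRadialWeight ν) :
    ∃ (N : ℕ) (α A : ℝ), 1 ≤ N ∧ 0 < α ∧ α ≤ 1 ∧ 0 < A ∧ ∀ r ∈ Ico (0 : ℝ) 1, ∀ ρ ∈ Ico (0 : ℝ) 1,
      tl ν r ≤ A * (((1 - r) / (1 - ρ)) ^ α + ((1 - r) / (1 - ρ)) ^ (N : ℝ)) * tl ν ρ := by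
  obtain ⟨N, hN, hup⟩ := hD.1.exists_tl_le_pow_mul h
  obtain ⟨C, α, hC, hα0, hα1, hlow⟩ := hD.2.exists_tl_le_rpow_mul h
  refine ⟨N, α, C + 2 ^ N, hN, hα0, hα1, by positivity, fun r hr ρ hρ => ?_⟩
  have htl : 0 < tl ν ρ := h.2.2 ρ hρ
  have hr' : 0 < 1 - r := sub_pos.2 hr.2
  have hρ' : 0 < 1 - ρ := sub_pos.2 hρ.2
  rw [Real.rpow_natCast]
  set x := (1 - r) / (1 - ρ)
  have : 0 < x := div_pos hr' hρ'
  rcases le_total r ρ with hrρ | hρr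
  · calc tl ν r ≤ 2 ^ N * x ^ N * tl ν ρ := by rw [← mul_pow]; exact hup r ρ hr.1 hrρ hρ.2
      _ ≤ (C + 2 ^ N) * (x ^ α + x ^ N) * tl ν ρ := by
        gcongr
        · exact le_add_of_nonneg_left hC.le
        · exact le_add_of_nonneg_left (by positivity)
  · calc tl ν r ≤ C * x ^ α * tl ν ρ := hlow ρ r hρ.1 hρr hr.2
      _ ≤ (C + 2 ^ N) * (x ^ α + x ^ N) * tl ν ρ := by
        gcongr
        · exact le_add_of_nonneg_right (by positivity)
        · exact le_add_of_nonneg_right (by positivity)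

end RadialWeight

section Moments

variable {ω : ℝ → ℝ}

lemma integrableOn_rpow_mul {x : ℝ} (hx : 0 ≤ x) (h : IntegrableOn ω (Ioo 0 1)) :
    IntegrableOn (fun s => s ^ x * ω s) (Ioo 0 1) := by
  refine Integrable.mono' h.norm
    ((Measurable.pow_const measurable_id x).aestronglyMeasurable.mul h.1) ?_
  filter_upwards [ae_restrict_mem measurableSet_Ioo] with s hs
  rw [norm_mul, Real.norm_of_nonneg (Real.rpow_nonneg hs.1.le x)]
  exact mul_le_of_le_one_left (norm_nonneg _) (Real.rpow_le_one hs.1.le hs.2.le hx)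

lemma mom_eq_setIntegral (ω : ℝ → ℝ) (x : ℝ) : mom ω x = ∫ s in Ioo (0 : ℝ) 1, s ^ x * ω s := by
  rw [mom, intervalIntegral.integral_of_le zero_le_one, integral_Ioc_eq_integral_Ioo]

lemma mom_nonneg (hω : ∀ s ∈ Ioo (0 : ℝ) 1, 0 ≤ ω s) (x : ℝ) : 0 ≤ mom ω x := by
  rw [mom_eq_setIntegral]
  exact setIntegral_nonneg measurableSet_Ioo fun s hs =>
    mul_nonneg (Real.rpow_nonneg hs.1.le x) (hω s hs)

lemma IsRadialWeight.integrableOn_Ioo (h : IsRadialWeight ω) : IntegrableOn ω (Ioo 0 1) :=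
  h.2.1.mono_set Ioo_subset_Ico_self

lemma IsRadialWeight.rpow_mul_tl_le_mom (h : IsRadialWeight ω) {x q : ℝ} (hx : 0 ≤ x)
    (hq : q ∈ Ico (0 : ℝ) 1) : q ^ x * tl ω q ≤ mom ω x := by
  have hint := integrableOn_rpow_mul hx h.integrableOn_Ioo
  have hsub : Ioo q 1 ⊆ Ioo 0 1 := Ioo_subset_Ioo_left hq.1
  rw [mom_eq_setIntegral, tl, intervalIntegral.integral_of_le hq.2.le,
    integral_Ioc_eq_integral_Ioo, ← integral_const_mul]
  calc ∫ s in Ioo q 1, q ^ x * ω s ≤ ∫ s in Ioo q 1, s ^ x * ω s := by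
        refine setIntegral_mono_on ((h.integrableOn_Ioo.mono_set hsub).const_mul _)
          (hint.mono_set hsub) measurableSet_Ioo fun s hs => ?_
        exact mul_le_mul_of_nonneg_right (Real.rpow_le_rpow hq.1 hs.1.le hx)
          (h.1 s ⟨hq.1.trans hs.1.le, hs.2⟩)
    _ ≤ ∫ s in Ioo 0 1, s ^ x * ω s := by
        refine setIntegral_mono_set hint ?_ hsub.eventuallyLE
        filter_upwards [ae_restrict_mem measurableSet_Ioo] with s hs
        exact mul_nonneg (Real.rpow_nonneg hs.1.le x) (h.1 s ⟨hs.1.le, hs.2⟩)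

lemma IsRadialWeight.mom_pos (h : IsRadialWeight ω) {x : ℝ} (hx : 0 ≤ x) : 0 < mom ω x := by
  have hhalf : (1 / 2 : ℝ) ∈ Ico (0 : ℝ) 1 := ⟨by norm_num, by norm_num⟩
  exact (mul_pos (by positivity) (h.2.2 _ hhalf)).trans_le (h.rpow_mul_tl_le_mom hx hhalf)

lemma IsRadialWeight.mom_odd_pos (h : IsRadialWeight ω) (n : ℕ) : 0 < mom ω (2 * (n : ℝ) + 1) :=
  h.mom_pos (by positivity)

lemma IsRadialWeight.summable_pow_div_mom (h : IsRadialWeight ω) {x : ℝ} (hx0 : 0 ≤ x)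
    (hx1 : x < 1) : Summable fun n : ℕ => x ^ n / (2 * mom ω (2 * (n : ℝ) + 1)) := by
  set q := √((1 + x) / 2)
  have hq2 : q ^ 2 = (1 + x) / 2 := Real.sq_sqrt (by linarith)
  have hq0 : 0 < q := Real.sqrt_pos.2 (by linarith)
  have hq1 : q < 1 := by nlinarith
  have htl : 0 < tl ω q := h.2.2 q ⟨hq0.le, hq1⟩
  have hgeom : Summable fun n : ℕ => (x / q ^ 2) ^ n * (2 * q * tl ω q)⁻¹ :=
    (summable_geometric_of_lt_one (by positivity)
      ((div_lt_one (by positivity)).2 (by linarith))).mul_right _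
  refine hgeom.of_nonneg_of_le (fun n => ?_) fun n => ?_
  · have := h.mom_odd_pos n
    positivity
  · have hmom : q ^ (2 * n + 1) * tl ω q ≤ mom ω (2 * (n : ℝ) + 1) := by
      simpa only [← Real.rpow_natCast, Nat.cast_add, Nat.cast_mul, Nat.cast_ofNat, Nat.cast_one]
        using h.rpow_mul_tl_le_mom (by positivity : (0 : ℝ) ≤ 2 * n + 1) ⟨hq0.le, hq1⟩
    calc x ^ n / (2 * mom ω (2 * (n : ℝ) + 1)) ≤ x ^ n / (2 * (q ^ (2 * n + 1) * tl ω q)) := by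
          gcongr
      _ = (x / q ^ 2) ^ n * (2 * q * tl ω q)⁻¹ := by
          rw [div_pow, ← pow_mul, pow_succ]
          field_simp

end Moments

section Projection

variable {ω : ℝ → ℝ} {f : ℂ → ℂ} {z : ℂ}

lemma mem_unitDisc : z ∈ unitDisc ↔ ‖z‖ < 1 := mem_ball_zero_iff

lemma isOpen_unitDisc : IsOpen unitDisc := Metric.isOpen_ball

lemma measurableSet_unitDisc : MeasurableSet unitDisc := isOpen_unitDisc.measurableSet

lemma norm_mem_Ico_of_mem_unitDisc (hz : z ∈ unitDisc) : ‖z‖ ∈ Ico (0 : ℝ) 1 :=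
  ⟨norm_nonneg z, mem_unitDisc.1 hz⟩

lemma IsRadialWeight.continuousOn_bKer (h : IsRadialWeight ω) (hz : z ∈ unitDisc) :
    ContinuousOn (bKer ω z) unitDisc := by
  refine continuousOn_tsum (fun n => by fun_prop)
    (h.summable_pow_div_mom (norm_nonneg z) (mem_unitDisc.1 hz)) fun n ζ hζ => ?_
  have hmom := h.mom_odd_pos n
  rw [norm_div, norm_pow, norm_mul, RCLike.norm_conj, Complex.norm_real,
    Real.norm_of_nonneg (by positivity)]
  gcongr
  exact mul_le_of_le_one_right (norm_nonneg z) (mem_unitDisc.1 hζ).le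

lemma IsRadialWeight.aestronglyMeasurable_comp_norm (h : IsRadialWeight ω) :
    AEStronglyMeasurable (fun ζ : ℂ => ω ‖ζ‖) (volume.restrict unitDisc) := by
  have hint : IntegrableOn (fun ζ : ℂ => ω ‖ζ‖) unitDisc := by
    rw [unitDisc, integrableOn_fun_norm_addHaar]
    simpa using integrableOn_rpow_mul zero_le_one h.integrableOn_Ioo
  exact hint.aestronglyMeasurable

lemma IsRadialWeight.aestronglyMeasurable_bInt (h : IsRadialWeight ω)
    (hf : AEStronglyMeasurable f (volume.restrict unitDisc)) (hz : z ∈ unitDisc) :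
    AEStronglyMeasurable (bInt ω f z) (volume.restrict unitDisc) := by
  have hker : AEStronglyMeasurable (fun ζ => conj (bKer ω z ζ)) (volume.restrict unitDisc) :=
    (Complex.continuous_conj.comp_continuousOn (h.continuousOn_bKer hz)).aestronglyMeasurable
      measurableSet_unitDisc
  exact (hf.mul hker).mul
    (Complex.continuous_ofReal.comp_aestronglyMeasurable h.aestronglyMeasurable_comp_norm)

lemma bKer_zero_left (ω : ℝ → ℝ) (ζ : ℂ) : bKer ω 0 ζ = (2 * mom ω 1 : ℂ)⁻¹ := by
  rw [bKer, tsum_eq_single 0 fun n hn => by simp [hn]]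
  simp

lemma IsRadialWeight.integrableOn_mul_of_bInt (h : IsRadialWeight ω)
    (hf : IntegrableOn (bInt ω f 0) unitDisc) :
    IntegrableOn (fun ζ => f ζ * ω ‖ζ‖) unitDisc := by
  have hmom : (mom ω 1 : ℂ) ≠ 0 := mod_cast (h.mom_pos zero_le_one).ne'
  refine (hf.const_mul (2 * mom ω 1 : ℂ)).congr (.of_forall fun ζ => ?_)
  simp only [bInt, bKer_zero_left, map_inv₀, map_mul, map_ofNat, Complex.conj_ofReal]
  field_simp

/-- The `n`-th Taylor coefficient at the origin of `P_ω f`. -/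
def bProjCoeff (ω : ℝ → ℝ) (f : ℂ → ℂ) (n : ℕ) : ℂ :=
  (π : ℂ)⁻¹ * (∫ ζ in unitDisc, f ζ * ω ‖ζ‖ * conj ζ ^ n) / (2 * mom ω (2 * (n : ℝ) + 1) : ℝ)

lemma norm_mul_conj_pow_le (w : ℂ) {ζ : ℂ} (hζ : ζ ∈ unitDisc) (n : ℕ) :
    ‖w * conj ζ ^ n‖ ≤ ‖w‖ := by
  rw [norm_mul, norm_pow, RCLike.norm_conj]
  exact mul_le_of_le_one_right (norm_nonneg w)
    (pow_le_one₀ (norm_nonneg ζ) (mem_unitDisc.1 hζ).le)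

lemma integrableOn_mul_conj_pow {g : ℂ → ℂ} (hg : IntegrableOn g unitDisc) (n : ℕ) :
    IntegrableOn (fun ζ => g ζ * conj ζ ^ n) unitDisc := by
  refine hg.norm.mono' (hg.1.mul
    (by fun_prop : Continuous fun ζ : ℂ => conj ζ ^ n).aestronglyMeasurable) ?_
  filter_upwards [ae_restrict_mem measurableSet_unitDisc] with ζ hζ
  exact norm_mul_conj_pow_le _ hζ n

lemma IsRadialWeight.norm_bProjCoeff_le (h : IsRadialWeight ω)
    (hf : IntegrableOn (fun ζ => f ζ * ω ‖ζ‖) unitDisc) (n : ℕ) :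
    ‖bProjCoeff ω f n‖ ≤
      π⁻¹ * (∫ ζ in unitDisc, ‖f ζ * ω ‖ζ‖‖) / (2 * mom ω (2 * (n : ℝ) + 1)) := by
  have hmom := h.mom_odd_pos n
  rw [bProjCoeff, norm_div, norm_mul, norm_inv, Complex.norm_real, Complex.norm_real,
    Real.norm_of_nonneg Real.pi_pos.le, Real.norm_of_nonneg (by positivity)]
  gcongr
  exact norm_integral_le_of_norm_le hf.norm
    ((ae_restrict_mem measurableSet_unitDisc).mono fun ζ hζ => norm_mul_conj_pow_le _ hζ n)

lemma bInt_eq_tsum (ω : ℝ → ℝ) (f : ℂ → ℂ) (z ζ : ℂ) :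
    bInt ω f z ζ = ∑' n : ℕ, z ^ n / (2 * mom ω (2 * (n : ℝ) + 1) : ℝ) *
      (f ζ * ω ‖ζ‖ * conj ζ ^ n) := by
  rw [bInt, bKer, ← Complex.conjCLE_apply, ContinuousLinearEquiv.map_tsum, ← tsum_mul_left,
    ← tsum_mul_right]
  congr with n
  simp only [Complex.conjCLE_apply, map_div₀, map_pow, map_mul, Complex.conj_conj,
    Complex.conj_ofReal, mul_pow]
  ring

lemma IsRadialWeight.hasSum_bProj (h : IsRadialWeight ω)
    (hf : IntegrableOn (fun ζ => f ζ * ω ‖ζ‖) unitDisc) (hz : z ∈ unitDisc) :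
    HasSum (fun n => bProjCoeff ω f n * z ^ n) (bProj ω f z) := by
  set m : ℕ → ℝ := fun n => 2 * mom ω (2 * (n : ℝ) + 1) with hm
  have hm0 : ∀ n, 0 ≤ m n := fun n => by have := h.mom_odd_pos n; positivity
  have hint : ∀ n : ℕ, IntegrableOn (fun ζ => z ^ n / m n * (f ζ * ω ‖ζ‖ * conj ζ ^ n)) unitDisc :=
    fun n => (integrableOn_mul_conj_pow hf n).const_mul _
  have hnorm : Summable fun n => ∫ ζ in unitDisc, ‖z ^ n / m n * (f ζ * ω ‖ζ‖ * conj ζ ^ n)‖ := by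
    refine ((h.summable_pow_div_mom (norm_nonneg z) (mem_unitDisc.1 hz)).mul_right
      (∫ ζ in unitDisc, ‖f ζ * ω ‖ζ‖‖)).of_nonneg_of_le
      (fun n => integral_nonneg fun _ => norm_nonneg _) fun n => ?_
    rw [← integral_const_mul]
    refine setIntegral_mono_on (hint n).norm (hf.norm.const_mul _) measurableSet_unitDisc
      fun ζ hζ => ?_
    rw [norm_mul, norm_div, norm_pow, Complex.norm_real, Real.norm_of_nonneg (hm0 n)]
    exact mul_le_mul_of_nonneg_left (norm_mul_conj_pow_le _ hζ n)
      (div_nonneg (by positivity) (hm0 n))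
  have hsum := (hasSum_integral_of_summable_integral_norm hint hnorm).mul_left (π : ℂ)⁻¹
  simp_rw [hm, ← bInt_eq_tsum, integral_const_mul] at hsum
  refine hsum.congr_fun fun n => ?_
  rw [bProjCoeff]
  ring

lemma IsRadialWeight.differentiableOn_bProj (h : IsRadialWeight ω)
    (hf : IntegrableOn (fun ζ => f ζ * ω ‖ζ‖) unitDisc) :
    DifferentiableOn ℂ (bProj ω f) unitDisc := by
  intro z hz
  obtain ⟨R, hzR, hR⟩ := exists_between (mem_unitDisc.1 hz)
  have hR0 : 0 ≤ R := (norm_nonneg z).trans hzR.le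
  have hball : Metric.ball (0 : ℂ) R ⊆ unitDisc := Metric.ball_subset_ball hR.le
  have hsummable := (h.summable_pow_div_mom hR0 hR).mul_left
    (π⁻¹ * ∫ ζ in unitDisc, ‖f ζ * ω ‖ζ‖‖)
  have hdiff : DifferentiableOn ℂ (fun w => ∑' n, bProjCoeff ω f n * w ^ n)
      (Metric.ball 0 R) := by
    refine differentiableOn_tsum_of_summable_norm hsummable (fun n => by fun_prop)
      Metric.isOpen_ball fun n w hw => ?_
    rw [norm_mul, norm_pow, mul_div_assoc', mul_div_right_comm]
    have hmom := h.mom_odd_pos n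
    gcongr
    · exact h.norm_bProjCoeff_le hf n
    · exact (mem_ball_zero_iff.1 hw).le
  refine DifferentiableAt.differentiableWithinAt ?_
  refine (hdiff.congr fun w hw => ?_).differentiableAt
    (Metric.isOpen_ball.mem_nhds (mem_ball_zero_iff.2 hzR))
  exact (h.hasSum_bProj hf (hball hw)).tsum_eq.symm

end Projection

section WeightedSup

variable {ω v : ℝ → ℝ} {f g : ℂ → ℂ} {z : ℂ} {M : ℝ}

lemma wSup_le_ofReal (h : ∀ z ∈ unitDisc, ‖f z‖ * v ‖z‖ ≤ M) :
    wSup v f ≤ ENNReal.ofReal M :=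
  essSup_le_of_ae_le _ ((ae_restrict_mem measurableSet_unitDisc).mono fun z hz =>
    ENNReal.ofReal_le_ofReal (h z hz))

lemma ae_norm_mul_le_of_wSup_le (hM : 0 ≤ M) (h : wSup v f ≤ ENNReal.ofReal M) :
    ∀ᵐ z ∂volume.restrict unitDisc, ‖f z‖ * v ‖z‖ ≤ M := by
  filter_upwards [ENNReal.ae_le_essSup (μ := volume.restrict unitDisc)
    fun z => ENNReal.ofReal (‖f z‖ * v ‖z‖)] with z hz
  exact (ENNReal.ofReal_le_ofReal_iff hM).1 (hz.trans h)

lemma norm_mul_le_of_wSup_le (hg : ContinuousOn g unitDisc)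
    (hv : ContinuousOn v (Ico 0 1)) (hM : 0 ≤ M) (h : wSup v g ≤ ENNReal.ofReal M)
    (hz : z ∈ unitDisc) : ‖g z‖ * v ‖z‖ ≤ M := by
  have hcont : ContinuousOn (fun z => ‖g z‖ * v ‖z‖) unitDisc :=
    hg.norm.mul (hv.comp continuous_norm.continuousOn fun z hz => norm_mem_Ico_of_mem_unitDisc hz)
  have hmax : (fun z => max (‖g z‖ * v ‖z‖) M) =ᵐ[volume.restrict unitDisc] fun _ => M := by
    filter_upwards [ae_norm_mul_le_of_wSup_le hM h] with z hz using max_eq_right hz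
  exact max_eq_right_iff.1 (Measure.eqOn_open_of_ae_eq hmax isOpen_unitDisc
    (hcont.sup continuousOn_const) continuousOn_const hz)

lemma ae_norm_mul_le_toReal_wSup (hf : wSup v f < ⊤) :
    ∀ᵐ z ∂volume.restrict unitDisc, ‖f z‖ * v ‖z‖ ≤ (wSup v f).toReal :=
  ae_norm_mul_le_of_wSup_le ENNReal.toReal_nonneg (ENNReal.ofReal_toReal hf.ne).ge

lemma IsRadialWeight.ae_enorm_bInt_le (hω : IsRadialWeight ω)
    (hv : ∀ s ∈ Ico (0 : ℝ) 1, 0 < v s)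
    (hf : ∀ᵐ ζ ∂volume.restrict unitDisc, ‖f ζ‖ * v ‖ζ‖ ≤ M) (z : ℂ) :
    ∀ᵐ ζ ∂volume.restrict unitDisc,
      ‖bInt ω f z ζ‖ₑ ≤ ENNReal.ofReal M * ENNReal.ofReal (‖bKer ω z ζ‖ * ω ‖ζ‖ / v ‖ζ‖) := by
  filter_upwards [hf, ae_restrict_mem measurableSet_unitDisc] with ζ hζ hζmem
  have hvζ := hv _ (norm_mem_Ico_of_mem_unitDisc hζmem)
  have hωζ := hω.1 _ (norm_mem_Ico_of_mem_unitDisc hζmem)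
  have hM : 0 ≤ M := le_trans (by positivity) hζ
  rw [← ENNReal.ofReal_mul hM, ← ofReal_norm]
  refine ENNReal.ofReal_le_ofReal ?_
  rw [bInt, norm_mul, norm_mul, RCLike.norm_conj, Complex.norm_real, Real.norm_of_nonneg hωζ]
  calc ‖f ζ‖ * ‖bKer ω z ζ‖ * ω ‖ζ‖
      = ‖f ζ‖ * v ‖ζ‖ * (‖bKer ω z ζ‖ * ω ‖ζ‖ / v ‖ζ‖) := by field_simp
    _ ≤ M * (‖bKer ω z ζ‖ * ω ‖ζ‖ / v ‖ζ‖) := by gcongr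

lemma projBddH_of_lintegral_bKer_le (hω : IsRadialWeight ω) (hv : ∀ s ∈ Ico (0 : ℝ) 1, 0 < v s)
    {C : ℝ} (hC : 0 < C) (hker : ∀ z ∈ unitDisc,
      ∫⁻ ζ in unitDisc, ENNReal.ofReal (‖bKer ω z ζ‖ * ω ‖ζ‖ / v ‖ζ‖) ≤
        ENNReal.ofReal (C / v ‖z‖)) :
    ProjBddH ω v := by
  refine ⟨C, hC, fun f hf hfin => ?_⟩
  set M := (wSup v f).toReal with hM
  have hM0 : 0 ≤ M := ENNReal.toReal_nonneg
  have hbound : ∀ z ∈ unitDisc,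
      ∫⁻ ζ in unitDisc, ‖bInt ω f z ζ‖ₑ ≤ ENNReal.ofReal (C * M / v ‖z‖) := fun z hz => calc
    _ ≤ ENNReal.ofReal M *
          ∫⁻ ζ in unitDisc, ENNReal.ofReal (‖bKer ω z ζ‖ * ω ‖ζ‖ / v ‖ζ‖) := by
        rw [← lintegral_const_mul' _ _ ENNReal.ofReal_ne_top]
        exact lintegral_mono_ae (hω.ae_enorm_bInt_le hv (ae_norm_mul_le_toReal_wSup hfin) z)
    _ ≤ ENNReal.ofReal M * ENNReal.ofReal (C / v ‖z‖) := by gcongr; exact hker z hz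
    _ = ENNReal.ofReal (C * M / v ‖z‖) := by
        rw [← ENNReal.ofReal_mul hM0, mul_div_assoc', mul_comm M]
  have hint : ∀ z ∈ unitDisc, IntegrableOn (bInt ω f z) unitDisc := fun z hz =>
    ⟨hω.aestronglyMeasurable_bInt hf hz, (hbound z hz).trans_lt ENNReal.ofReal_lt_top⟩
  refine ⟨hint, hω.differentiableOn_bProj (hω.integrableOn_mul_of_bInt
    (hint 0 (mem_unitDisc.2 (by simp)))), ?_⟩
  rw [← ENNReal.ofReal_toReal hfin.ne, ← hM, ← ENNReal.ofReal_mul hC.le]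
  refine wSup_le_ofReal fun z hz => ?_
  have hvz := hv _ (norm_mem_Ico_of_mem_unitDisc hz)
  have hnorm : ‖∫ ζ in unitDisc, bInt ω f z ζ‖ ≤ C * M / v ‖z‖ := by
    rw [← ENNReal.ofReal_le_ofReal_iff (by positivity), ofReal_norm]
    exact (enorm_integral_le_lintegral_enorm _).trans (hbound z hz)
  rw [← le_div_iff₀ hvz, bProj, norm_mul, norm_inv, Complex.norm_real,
    Real.norm_of_nonneg Real.pi_pos.le]
  calc π⁻¹ * ‖∫ ζ in unitDisc, bInt ω f z ζ‖ ≤ 1 * (C * M / v ‖z‖) := by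
        gcongr
        exact inv_le_one_of_one_le₀ (by linarith [Real.pi_gt_three])
    _ = C * M / v ‖z‖ := one_mul _

end WeightedSup

section PolarCoordinates

lemma polarCoord_symm_eq_circleMap (p : ℝ × ℝ) :
    Complex.polarCoord.symm p = circleMap 0 p.1 p.2 := by
  rw [Complex.polarCoord_symm_apply, circleMap_zero, Complex.exp_mul_I, Complex.ofReal_cos,
    Complex.ofReal_sin]

lemma indicator_unitDisc_polarCoord_symm {E : Type*} [Zero E] (F : ℂ → E) {p : ℝ × ℝ}
    (hp : p ∈ polarCoord.target) :
    unitDisc.indicator F (Complex.polarCoord.symm p) =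
      (Ioo 0 1 ×ˢ Ioo (-π) π).indicator (fun p : ℝ × ℝ => F (circleMap 0 p.1 p.2)) p := by
  rw [polarCoord_target] at hp
  have hmem : circleMap 0 p.1 p.2 ∈ unitDisc ↔ p ∈ Ioo (0 : ℝ) 1 ×ˢ Ioo (-π) π := by
    rw [mem_unitDisc, norm_circleMap_zero, abs_of_pos hp.1]
    exact ⟨fun h => ⟨⟨hp.1, h⟩, hp.2⟩, fun h => h.1.2⟩
  rw [polarCoord_symm_eq_circleMap]
  exact indicator_eq_indicator hmem rfl

lemma Ioo_prod_Ioo_inter_polarCoord_target :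
    Ioo (0 : ℝ) 1 ×ˢ Ioo (-π) π ∩ polarCoord.target = Ioo (0 : ℝ) 1 ×ˢ Ioo (-π) π := by
  rw [polarCoord_target, inter_eq_left]
  exact prod_mono_left Ioo_subset_Ioi_self

lemma lintegral_unitDisc_eq_polar (F : ℂ → ℝ≥0∞) :
    ∫⁻ ζ in unitDisc, F ζ =
      ∫⁻ p in Ioo (0 : ℝ) 1 ×ˢ Ioo (-π) π, ENNReal.ofReal p.1 * F (circleMap 0 p.1 p.2) := by
  rw [← lintegral_indicator measurableSet_unitDisc, ← Complex.lintegral_comp_polarCoord_symm,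
    ← Ioo_prod_Ioo_inter_polarCoord_target,
    ← setLIntegral_indicator (measurableSet_Ioo.prod measurableSet_Ioo)]
  refine setLIntegral_congr_fun polarCoord.open_target.measurableSet fun p hp => ?_
  rw [indicator_unitDisc_polarCoord_symm F hp, indicator_mul_right, smul_eq_mul]

lemma integral_unitDisc_eq_polar {E : Type*} [NormedAddCommGroup E] [NormedSpace ℝ E]
    (F : ℂ → E) :
    ∫ ζ in unitDisc, F ζ =
      ∫ p in Ioo (0 : ℝ) 1 ×ˢ Ioo (-π) π, p.1 • F (circleMap 0 p.1 p.2) := by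
  rw [← integral_indicator measurableSet_unitDisc, ← Complex.integral_comp_polarCoord_symm,
    ← Ioo_prod_Ioo_inter_polarCoord_target, inter_comm,
    ← setIntegral_indicator (measurableSet_Ioo.prod measurableSet_Ioo)]
  refine setIntegral_congr_fun polarCoord.open_target.measurableSet fun p hp => ?_
  simp only [indicator_unitDisc_polarCoord_symm F hp, indicator_smul_apply]

lemma lintegral_unitDisc_le (F : ℂ → ℝ≥0∞) :
    ∫⁻ ζ in unitDisc, F ζ ≤
      ∫⁻ ρ in Ioo (0 : ℝ) 1, ∫⁻ θ in Ioo (-π) π, F (circleMap 0 ρ θ) := by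
  rw [lintegral_unitDisc_eq_polar]
  calc ∫⁻ p in Ioo (0 : ℝ) 1 ×ˢ Ioo (-π) π, ENNReal.ofReal p.1 * F (circleMap 0 p.1 p.2)
      ≤ ∫⁻ p in Ioo (0 : ℝ) 1 ×ˢ Ioo (-π) π, F (circleMap 0 p.1 p.2) :=
        setLIntegral_mono' (measurableSet_Ioo.prod measurableSet_Ioo) fun p hp =>
          mul_le_of_le_one_left' (ENNReal.ofReal_le_one.2 hp.1.2.le)
    _ ≤ ∫⁻ ρ in Ioo (0 : ℝ) 1, ∫⁻ θ in Ioo (-π) π, F (circleMap 0 ρ θ) := by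
        rw [Measure.volume_eq_prod, ← Measure.prod_restrict]
        exact lintegral_prod_le _

lemma arg_circleMap_zero {ρ θ : ℝ} (hρ : 0 < ρ) (hθ : θ ∈ Ioc (-π) π) :
    Complex.arg (circleMap 0 ρ θ) = θ := by
  rw [circleMap_zero, Complex.exp_mul_I, Complex.arg_mul_cos_add_sin_mul_I hρ hθ]

lemma integral_unitDisc_arg_mul_norm_mul_conj_pow (g σ : ℝ → ℂ) (n : ℕ) :
    ∫ ζ in unitDisc, g (Complex.arg ζ) * σ ‖ζ‖ * conj ζ ^ n =
      (∫ s in Ioo (0 : ℝ) 1, s ^ (n + 1) * σ s) *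
        ∫ θ in Ioo (-π) π, g θ * conj (circleMap 0 1 θ) ^ n := by
  rw [integral_unitDisc_eq_polar, ← setIntegral_prod_mul, ← Measure.volume_eq_prod]
  refine setIntegral_congr_fun (measurableSet_Ioo.prod measurableSet_Ioo) fun p hp => ?_
  have hpolar : conj (circleMap 0 p.1 p.2) = p.1 * conj (circleMap 0 1 p.2) := by
    simp only [circleMap_zero, map_mul, Complex.conj_ofReal, Complex.ofReal_one, one_mul]
  rw [arg_circleMap_zero hp.1.1 (Ioo_subset_Ioc_self hp.2), norm_circleMap_zero,
    abs_of_pos hp.1.1, hpolar, Complex.real_smul]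
  ring

end PolarCoordinates

section KernelIntegrals

variable {w : ℂ}

lemma one_sub_norm_le_norm_one_sub_conj_mul_circleMap (w : ℂ) (θ : ℝ) :
    1 - ‖w‖ ≤ ‖1 - conj w * circleMap 0 1 θ‖ := by
  simpa using norm_sub_norm_le (1 : ℂ) (conj w * circleMap 0 1 θ)

lemma norm_one_sub_conj_mul_circleMap (w : ℂ) (θ : ℝ) :
    ‖1 - conj w * circleMap 0 1 θ‖ = ‖circleMap 0 1 θ - w‖ := by
  have hunit : circleMap 0 1 θ * conj (circleMap 0 1 θ) = 1 := by
    rw [Complex.mul_conj', norm_circleMap_zero]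
    simp
  have hfactor : 1 - conj w * circleMap 0 1 θ = circleMap 0 1 θ * conj (circleMap 0 1 θ - w) := by
    rw [map_sub, mul_sub, hunit, mul_comm]
  rw [hfactor, norm_mul, norm_circleMap_zero, RCLike.norm_conj, abs_one, one_mul]

lemma integral_inv_norm_one_sub_conj_mul_circleMap_sq (hw : ‖w‖ < 1) :
    ∫ θ in -π..π, (‖1 - conj w * circleMap 0 1 θ‖ ^ 2)⁻¹ = 2 * π / (1 - ‖w‖ ^ 2) := by
  have hw2 : 0 < 1 - ‖w‖ ^ 2 := by nlinarith [norm_nonneg w]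
  have hpoisson := (InnerProductSpace.harmonicContOnCl_const (E := ℂ)
    (c := (1 : ℝ))).circleAverage_poissonKernel_smul (mem_ball_zero_iff.2 hw)
  have hkernel (θ : ℝ) : (poissonKernel 0 w • fun _ : ℂ => (1 : ℝ)) (circleMap 0 1 θ) =
      (1 - ‖w‖ ^ 2) * (‖1 - conj w * circleMap 0 1 θ‖ ^ 2)⁻¹ := by
    rw [norm_one_sub_conj_mul_circleMap]
    simp [poissonKernel_def, div_eq_mul_inv]
  have hperiodic : Function.Periodic (fun θ : ℝ => (‖1 - conj w * circleMap 0 1 θ‖ ^ 2)⁻¹)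
      (2 * π) := fun θ => by simp only [periodic_circleMap 0 1 θ]
  have hshift := hperiodic.intervalIntegral_add_eq (-π) 0
  rw [zero_add, show -π + 2 * π = π by ring] at hshift
  rw [Real.circleAverage_def, funext hkernel, intervalIntegral.integral_const_mul, ← hshift,
    smul_eq_mul] at hpoisson
  rw [inv_mul_eq_iff_eq_mul₀ Real.two_pi_pos.ne', mul_one] at hpoisson
  rw [eq_div_iff hw2.ne', mul_comm, hpoisson]

lemma lintegral_inv_norm_one_sub_conj_mul_circleMap_pow_le (hw : ‖w‖ < 1) (N : ℕ) :
    ∫⁻ θ in Ioo (-π) π, ENNReal.ofReal (‖1 - conj w * circleMap 0 1 θ‖ ^ (N + 2))⁻¹ ≤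
      ENNReal.ofReal (2 * π / (1 - ‖w‖) ^ (N + 1)) := by
  have hw0 : 0 < 1 - ‖w‖ := sub_pos.2 hw
  have hlow := one_sub_norm_le_norm_one_sub_conj_mul_circleMap w
  have hcont : Continuous fun θ : ℝ => (‖1 - conj w * circleMap 0 1 θ‖ ^ 2)⁻¹ :=
    Continuous.inv₀ (by fun_prop) fun θ => (pow_pos (hw0.trans_le (hlow θ)) 2).ne'
  calc ∫⁻ θ in Ioo (-π) π, ENNReal.ofReal (‖1 - conj w * circleMap 0 1 θ‖ ^ (N + 2))⁻¹
      ≤ ∫⁻ θ in Ioo (-π) π, ENNReal.ofReal ((1 - ‖w‖) ^ N)⁻¹ *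
          ENNReal.ofReal (‖1 - conj w * circleMap 0 1 θ‖ ^ 2)⁻¹ := by
        refine lintegral_mono fun θ => ?_
        rw [← ENNReal.ofReal_mul (by positivity), ← mul_inv, pow_add]
        have := hw0.trans_le (hlow θ)
        gcongr
        exact hlow θ
    _ = ENNReal.ofReal (((1 - ‖w‖) ^ N)⁻¹ * (2 * π / (1 - ‖w‖ ^ 2))) := by
        rw [lintegral_const_mul' _ _ ENNReal.ofReal_ne_top, ENNReal.ofReal_mul (by positivity),
          ← ofReal_integral_eq_lintegral_ofReal
            (hcont.integrableOn_Icc.mono_set Ioo_subset_Icc_self)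
            (.of_forall fun θ => by positivity),
          ← integral_Ioc_eq_integral_Ioo,
          ← intervalIntegral.integral_of_le (by linarith [Real.pi_pos]),
          integral_inv_norm_one_sub_conj_mul_circleMap_sq hw]
    _ ≤ ENNReal.ofReal (2 * π / (1 - ‖w‖) ^ (N + 1)) := by
        have hle : 1 - ‖w‖ ≤ 1 - ‖w‖ ^ 2 := by nlinarith [norm_nonneg w]
        rw [← div_eq_inv_mul, div_div, pow_succ' (1 - ‖w‖)]
        gcongr

lemma lintegral_unitDisc_div_norm_one_sub_conj_mul_pow_le {h : ℝ → ℝ}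
    (hh : ∀ ρ ∈ Ioo (0 : ℝ) 1, 0 ≤ h ρ) {z : ℂ} (hz : z ∈ unitDisc) (N : ℕ) :
    ∫⁻ ζ in unitDisc, ENNReal.ofReal (h ‖ζ‖ / ‖1 - conj z * ζ‖ ^ (N + 2)) ≤
      ENNReal.ofReal (2 * π) *
        ∫⁻ ρ in Ioo (0 : ℝ) 1, ENNReal.ofReal (h ρ / (1 - ‖z‖ * ρ) ^ (N + 1)) := by
  refine (lintegral_unitDisc_le _).trans ?_
  rw [← lintegral_const_mul' _ _ ENNReal.ofReal_ne_top]
  refine setLIntegral_mono' measurableSet_Ioo fun ρ hρ => ?_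
  have hnorm : ‖z * ρ‖ = ‖z‖ * ρ := by
    rw [norm_mul, Complex.norm_real, Real.norm_of_nonneg hρ.1.le]
  have hlt : ‖z * ρ‖ < 1 := by
    rw [hnorm]
    exact mul_lt_one_of_nonneg_of_lt_one_left (norm_nonneg z) (mem_unitDisc.1 hz) hρ.2.le
  have hrotate (θ : ℝ) : conj z * circleMap 0 ρ θ = conj (z * ρ) * circleMap 0 1 θ := by
    rw [map_mul, Complex.conj_ofReal, circleMap_zero, circleMap_zero, Complex.ofReal_one, one_mul,
      mul_assoc]
  simp_rw [hrotate, norm_circleMap_zero, abs_of_pos hρ.1, div_eq_mul_inv (h ρ),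
    ENNReal.ofReal_mul (hh ρ hρ)]
  rw [lintegral_const_mul' _ _ ENNReal.ofReal_ne_top]
  calc ENNReal.ofReal (h ρ) *
        ∫⁻ θ in Ioo (-π) π, ENNReal.ofReal (‖1 - conj (z * ρ) * circleMap 0 1 θ‖ ^ (N + 2))⁻¹
      ≤ ENNReal.ofReal (h ρ) * ENNReal.ofReal (2 * π / (1 - ‖z * ρ‖) ^ (N + 1)) := by
        gcongr
        exact lintegral_inv_norm_one_sub_conj_mul_circleMap_pow_le hlt N
    _ = ENNReal.ofReal (2 * π) *
        (ENNReal.ofReal (h ρ) * ENNReal.ofReal ((1 - ‖z‖ * ρ) ^ (N + 1))⁻¹) := by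
        rw [hnorm, div_eq_mul_inv, ENNReal.ofReal_mul (by positivity), mul_left_comm]

lemma lintegral_rpow_mul_one_sub_add_rpow_le {a δ : ℝ} (ha : 0 < a) (hδ : 0 < δ) :
    ∫⁻ ρ in Ioo (0 : ℝ) 1, ENNReal.ofReal (δ ^ a * (1 - ρ + δ) ^ (-1 - a)) ≤
      ENNReal.ofReal (1 / a) := by
  have hpos : ∀ ρ ∈ Icc (0 : ℝ) 1, 0 < 1 - ρ + δ := fun ρ hρ => by linarith [hρ.2]
  have hcont : ContinuousOn (fun ρ : ℝ => δ ^ a * (1 - ρ + δ) ^ (-1 - a)) (Icc 0 1) :=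
    continuousOn_const.mul
      (ContinuousOn.rpow_const (by fun_prop) fun ρ hρ => Or.inl (hpos ρ hρ).ne')
  have hderiv : ∀ x ∈ uIcc (0 : ℝ) 1, HasDerivAt (fun ρ : ℝ => δ ^ a * ((1 - ρ + δ) ^ (-a) / a))
      (δ ^ a * (1 - x + δ) ^ (-1 - a)) x := by
    rw [uIcc_of_le zero_le_one]
    intro x hx
    have hlin : HasDerivAt (fun ρ : ℝ => 1 - ρ + δ) (-1) x :=
      ((hasDerivAt_id x).const_sub 1).add_const δ
    refine (((hlin.rpow_const (p := -a) (.inl (hpos x hx).ne')).div_const a).const_mul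
      (δ ^ a)).congr_deriv ?_
    rw [show -a - 1 = -1 - a by ring]
    field_simp
  have hval : ∫ ρ in Ioo (0 : ℝ) 1, δ ^ a * (1 - ρ + δ) ^ (-1 - a) =
      1 / a - δ ^ a * ((1 + δ) ^ (-a) / a) := by
    rw [← integral_Ioc_eq_integral_Ioo, ← intervalIntegral.integral_of_le zero_le_one,
      intervalIntegral.integral_eq_sub_of_hasDerivAt hderiv
        (ContinuousOn.intervalIntegrable (by rwa [uIcc_of_le zero_le_one])),
      sub_self, zero_add, sub_zero, mul_div_assoc', ← Real.rpow_add hδ, add_neg_cancel,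
      Real.rpow_zero]
  rw [← ofReal_integral_eq_lintegral_ofReal (hcont.integrableOn_Icc.mono_set Ioo_subset_Icc_self)
    ?_, hval]
  · exact ENNReal.ofReal_le_ofReal (sub_le_self _ (by positivity))
  · filter_upwards [ae_restrict_mem measurableSet_Ioo] with ρ hρ
    have := hpos ρ (Ioo_subset_Icc_self hρ)
    simp only [Pi.zero_apply]
    positivity

end KernelIntegrals

section StandardWeight

/-- The radial weight `s ↦ (1 - s²)^N`, the choice of `ω` for which `P_ω` is bounded: its Bergman
kernel is a multiple of `(1 - z̄ζ)^{-(N+2)}`. -/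
def stdWeight (N : ℕ) (s : ℝ) : ℝ := (1 - s ^ 2) ^ N

@[fun_prop]
lemma continuous_stdWeight (N : ℕ) : Continuous (stdWeight N) := by
  unfold stdWeight
  fun_prop

lemma stdWeight_pos (N : ℕ) {s : ℝ} (hs : s ∈ Ico (0 : ℝ) 1) : 0 < stdWeight N s :=
  pow_pos (by nlinarith [hs.1, hs.2]) N

lemma stdWeight_le (N : ℕ) {s : ℝ} (hs : s ∈ Ico (0 : ℝ) 1) :
    stdWeight N s ≤ 2 ^ N * (1 - s) ^ N := by
  rw [stdWeight, ← mul_pow]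
  gcongr <;> nlinarith [hs.1, hs.2]

lemma isRadialWeight_stdWeight (N : ℕ) : IsRadialWeight (stdWeight N) := by
  refine ⟨fun s hs => (stdWeight_pos N hs).le,
    (continuous_stdWeight N).integrableOn_Icc.mono_set Ico_subset_Icc_self, fun r hr => ?_⟩
  exact intervalIntegral.intervalIntegral_pos_of_pos_on
    ((continuous_stdWeight N).intervalIntegrable _ _)
    (fun s hs => stdWeight_pos N ⟨hr.1.trans hs.1.le, hs.2⟩) hr.2

lemma integral_pow_mul_stdWeight (N n : ℕ) :
    ∫ s in (0 : ℝ)..1, s ^ (2 * n + 1) * stdWeight N s =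
      (n.factorial * N.factorial : ℝ) / (2 * (n + N + 1).factorial) := by
  induction N generalizing n with
  | zero =>
    simp only [stdWeight, pow_zero, mul_one, integral_pow, Nat.factorial_succ, Nat.factorial_zero,
      add_zero]
    have : (n.factorial : ℝ) ≠ 0 := mod_cast n.factorial_ne_zero
    push_cast
    field_simp
    norm_num
    ring
  | succ N ih =>
    have hsplit (s : ℝ) : s ^ (2 * n + 1) * stdWeight (N + 1) s =
        s ^ (2 * n + 1) * stdWeight N s - s ^ (2 * (n + 1) + 1) * stdWeight N s := by
      unfold stdWeight
      ring
    have hint (k : ℕ) : IntervalIntegrable (fun s => s ^ k * stdWeight N s) volume 0 1 :=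
      Continuous.intervalIntegrable (by fun_prop) _ _
    have : ((n + N + 1).factorial : ℝ) ≠ 0 := mod_cast (n + N + 1).factorial_ne_zero
    simp_rw [hsplit]
    rw [intervalIntegral.integral_sub (hint _) (hint _), ih n, ih (n + 1),
      show n + 1 + N + 1 = n + N + 1 + 1 by ring, show n + (N + 1) + 1 = n + N + 1 + 1 by ring,
      Nat.factorial_succ (n + N + 1), Nat.factorial_succ N, Nat.factorial_succ n]
    push_cast
    field_simp
    ring

lemma two_mul_mom_stdWeight (N n : ℕ) :
    2 * mom (stdWeight N) (2 * (n : ℝ) + 1) =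
      ((N + 1) * (n + (N + 1)).choose (N + 1) : ℝ)⁻¹ := by
  have hexp : (2 * (n : ℝ) + 1) = ((2 * n + 1 : ℕ) : ℝ) := by push_cast; ring
  have hchoose : ((n + N + 1).factorial : ℝ) =
      (n + (N + 1)).choose (N + 1) * (N + 1).factorial * n.factorial := by
    rw [mul_right_comm, add_assoc]
    exact_mod_cast (Nat.add_choose_mul_factorial_mul_factorial n (N + 1)).symm
  have : (n.factorial : ℝ) ≠ 0 := mod_cast n.factorial_ne_zero
  have : (N.factorial : ℝ) ≠ 0 := mod_cast N.factorial_ne_zero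
  simp only [mom, hexp, Real.rpow_natCast]
  rw [integral_pow_mul_stdWeight, hchoose, Nat.factorial_succ N]
  push_cast
  field_simp

lemma bKer_stdWeight (N : ℕ) {z ζ : ℂ} (h : ‖conj z * ζ‖ < 1) :
    bKer (stdWeight N) z ζ = (N + 1) / (1 - conj z * ζ) ^ (N + 2) := by
  have hsum := (hasSum_choose_mul_geometric_of_norm_lt_one (N + 1) h).mul_left ((N : ℂ) + 1)
  rw [mul_one_div] at hsum
  refine Eq.trans (tsum_congr fun n => ?_) hsum.tsum_eq
  rw [two_mul_mom_stdWeight]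
  push_cast
  rw [div_inv_eq_mul]
  ring

lemma norm_bKer_stdWeight (N : ℕ) {z ζ : ℂ} (hz : z ∈ unitDisc) (hζ : ζ ∈ unitDisc) :
    ‖bKer (stdWeight N) z ζ‖ = (N + 1) / ‖1 - conj z * ζ‖ ^ (N + 2) := by
  have hlt : ‖conj z * ζ‖ < 1 := by
    rw [norm_mul, RCLike.norm_conj]
    exact mul_lt_one_of_nonneg_of_lt_one_left (norm_nonneg z) (mem_unitDisc.1 hz)
      (mem_unitDisc.1 hζ).le
  rw [bKer_stdWeight N hlt, norm_div, norm_pow]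
  norm_cast

lemma stdWeight_mul_div_rpow_div_pow_le {N : ℕ} {a : ℝ} (haN : a ≤ N) {r ρ : ℝ}
    (hr : r ∈ Ico (0 : ℝ) 1) (hρ : ρ ∈ Ioo (0 : ℝ) 1) :
    stdWeight N ρ * ((1 - r) / (1 - ρ)) ^ a / (1 - r * ρ) ^ (N + 1) ≤
      2 * 4 ^ N * ((1 - r) ^ a * (1 - ρ + (1 - r)) ^ (-1 - a)) := by
  have hu : 0 < 1 - ρ := sub_pos.2 hρ.2
  have hδ : 0 < 1 - r := sub_pos.2 hr.2
  have huδ : 0 < 1 - ρ + (1 - r) := add_pos hu hδ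
  have hdenom : (1 - ρ + (1 - r)) / 2 ≤ 1 - r * ρ := by nlinarith [hr.1, hρ.1]
  have hweight : stdWeight N ρ * ((1 - r) / (1 - ρ)) ^ a ≤
      2 ^ N * ((1 - r) ^ a * (1 - ρ + (1 - r)) ^ ((N : ℝ) - a)) :=
    calc stdWeight N ρ * ((1 - r) / (1 - ρ)) ^ a
        ≤ 2 ^ N * (1 - ρ) ^ N * ((1 - r) / (1 - ρ)) ^ a := by
          gcongr
          exact stdWeight_le N (Ioo_subset_Ico_self hρ)
      _ = 2 ^ N * ((1 - r) ^ a * (1 - ρ) ^ ((N : ℝ) - a)) := by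
          rw [Real.div_rpow hδ.le hu.le, Real.rpow_sub hu, Real.rpow_natCast]
          ring
      _ ≤ 2 ^ N * ((1 - r) ^ a * (1 - ρ + (1 - r)) ^ ((N : ℝ) - a)) := by
          gcongr
          linarith
  have hpow : (1 - ρ + (1 - r)) ^ ((N : ℝ) - a) / (1 - ρ + (1 - r)) ^ (N + 1) =
      (1 - ρ + (1 - r)) ^ (-1 - a) := by
    rw [← Real.rpow_natCast, ← Real.rpow_sub huδ]
    congr 1
    push_cast
    ring
  calc stdWeight N ρ * ((1 - r) / (1 - ρ)) ^ a / (1 - r * ρ) ^ (N + 1)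
      ≤ 2 ^ N * ((1 - r) ^ a * (1 - ρ + (1 - r)) ^ ((N : ℝ) - a)) /
          ((1 - ρ + (1 - r)) / 2) ^ (N + 1) := by
        gcongr
    _ = 2 * 4 ^ N * ((1 - r) ^ a * (1 - ρ + (1 - r)) ^ (-1 - a)) := by
        rw [← hpow, div_pow, show (4 : ℝ) = 2 * 2 by norm_num, mul_pow, pow_succ 2 N]
        field_simp

lemma lintegral_stdWeight_mul_rpow_div_norm_pow_le {N : ℕ} {a : ℝ} (ha : 0 < a) (haN : a ≤ N)
    {z : ℂ} (hz : z ∈ unitDisc) :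
    ∫⁻ ζ in unitDisc, ENNReal.ofReal
        (stdWeight N ‖ζ‖ * ((1 - ‖z‖) / (1 - ‖ζ‖)) ^ a / ‖1 - conj z * ζ‖ ^ (N + 2)) ≤
      ENNReal.ofReal (2 * π * (2 * 4 ^ N * (1 / a))) := by
  have hzI := norm_mem_Ico_of_mem_unitDisc hz
  have hz1 : 0 < 1 - ‖z‖ := sub_pos.2 hzI.2
  have hnonneg : ∀ ρ ∈ Ioo (0 : ℝ) 1, 0 ≤ stdWeight N ρ * ((1 - ‖z‖) / (1 - ρ)) ^ a := fun ρ hρ =>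
    mul_nonneg (stdWeight_pos N (Ioo_subset_Ico_self hρ)).le
      (Real.rpow_nonneg (div_nonneg hz1.le (sub_nonneg.2 hρ.2.le)) a)
  refine (lintegral_unitDisc_div_norm_one_sub_conj_mul_pow_le hnonneg hz N).trans ?_
  rw [ENNReal.ofReal_mul Real.two_pi_pos.le]
  gcongr
  calc ∫⁻ ρ in Ioo (0 : ℝ) 1, ENNReal.ofReal
        (stdWeight N ρ * ((1 - ‖z‖) / (1 - ρ)) ^ a / (1 - ‖z‖ * ρ) ^ (N + 1))
      ≤ ∫⁻ ρ in Ioo (0 : ℝ) 1, ENNReal.ofReal (2 * 4 ^ N) *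
          ENNReal.ofReal ((1 - ‖z‖) ^ a * (1 - ρ + (1 - ‖z‖)) ^ (-1 - a)) := by
        refine setLIntegral_mono' measurableSet_Ioo fun ρ hρ => ?_
        rw [← ENNReal.ofReal_mul (by positivity)]
        exact ENNReal.ofReal_le_ofReal (stdWeight_mul_div_rpow_div_pow_le haN hzI hρ)
    _ ≤ ENNReal.ofReal (2 * 4 ^ N * (1 / a)) := by
        rw [lintegral_const_mul' _ _ ENNReal.ofReal_ne_top,
          ENNReal.ofReal_mul (p := 2 * 4 ^ N) (by positivity)]
        gcongr
        exact lintegral_rpow_mul_one_sub_add_rpow_le ha hz1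

lemma DD.exists_norm_bKer_stdWeight_mul_div_tl_le {ν : ℝ → ℝ} (hD : DD ν) (h : IsRadialWeight ν) :
    ∃ (N : ℕ) (α A : ℝ), 1 ≤ N ∧ 0 < α ∧ α ≤ 1 ∧ 0 < A ∧ ∀ z ∈ unitDisc, ∀ ζ ∈ unitDisc,
      ‖bKer (stdWeight N) z ζ‖ * stdWeight N ‖ζ‖ / tl ν ‖ζ‖ ≤ A / tl ν ‖z‖ *
        (stdWeight N ‖ζ‖ * ((1 - ‖z‖) / (1 - ‖ζ‖)) ^ α / ‖1 - conj z * ζ‖ ^ (N + 2) +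
          stdWeight N ‖ζ‖ * ((1 - ‖z‖) / (1 - ‖ζ‖)) ^ (N : ℝ) / ‖1 - conj z * ζ‖ ^ (N + 2)) := by
  obtain ⟨N, α, A, hN, hα, hα1, hA, htl⟩ := hD.exists_tl_le h
  refine ⟨N, α, A * (N + 1), hN, hα, hα1, by positivity, fun z hz ζ hζ => ?_⟩
  have hzI := norm_mem_Ico_of_mem_unitDisc hz
  have hζI := norm_mem_Ico_of_mem_unitDisc hζ
  have htz : 0 < tl ν ‖z‖ := h.2.2 _ hzI
  have htζ : 0 < tl ν ‖ζ‖ := h.2.2 _ hζI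
  have hker : 0 ≤ ‖bKer (stdWeight N) z ζ‖ * stdWeight N ‖ζ‖ :=
    mul_nonneg (norm_nonneg _) (stdWeight_pos N hζI).le
  have hquot : 1 / tl ν ‖ζ‖ ≤ A / tl ν ‖z‖ *
      (((1 - ‖z‖) / (1 - ‖ζ‖)) ^ α + ((1 - ‖z‖) / (1 - ‖ζ‖)) ^ (N : ℝ)) := by
    rw [div_mul_eq_mul_div, div_le_div_iff₀ htζ htz, one_mul]
    exact htl _ hzI _ hζI
  calc ‖bKer (stdWeight N) z ζ‖ * stdWeight N ‖ζ‖ / tl ν ‖ζ‖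
      = ‖bKer (stdWeight N) z ζ‖ * stdWeight N ‖ζ‖ * (1 / tl ν ‖ζ‖) := by rw [mul_one_div]
    _ ≤ ‖bKer (stdWeight N) z ζ‖ * stdWeight N ‖ζ‖ * (A / tl ν ‖z‖ *
          (((1 - ‖z‖) / (1 - ‖ζ‖)) ^ α + ((1 - ‖z‖) / (1 - ‖ζ‖)) ^ (N : ℝ))) := by gcongr
    _ = A * (N + 1) / tl ν ‖z‖ *
        (stdWeight N ‖ζ‖ * ((1 - ‖z‖) / (1 - ‖ζ‖)) ^ α / ‖1 - conj z * ζ‖ ^ (N + 2) +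
          stdWeight N ‖ζ‖ * ((1 - ‖z‖) / (1 - ‖ζ‖)) ^ (N : ℝ) /
            ‖1 - conj z * ζ‖ ^ (N + 2)) := by
        rw [norm_bKer_stdWeight N hz hζ]
        ring

theorem DD.exists_projBddH {ν : ℝ → ℝ} (hD : DD ν) (h : IsRadialWeight ν) :
    ∃ ω : ℝ → ℝ, IsRadialWeight ω ∧ ProjBddH ω (tl ν) := by
  obtain ⟨N, α, A, hN, hα, hα1, hA, hker⟩ := hD.exists_norm_bKer_stdWeight_mul_div_tl_le h
  have hN1 : (1 : ℝ) ≤ N := mod_cast hN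
  have hNpos : (0 : ℝ) < N := zero_lt_one.trans_le hN1
  let I (a : ℝ) := 2 * π * (2 * 4 ^ N * (1 / a))
  refine ⟨stdWeight N, isRadialWeight_stdWeight N, projBddH_of_lintegral_bKer_le
    (isRadialWeight_stdWeight N) h.2.2 (C := A * (I α + I N)) (by positivity) fun z hz => ?_⟩
  have htz : 0 < tl ν ‖z‖ := h.2.2 _ (norm_mem_Ico_of_mem_unitDisc hz)
  let F (a : ℝ) (ζ : ℂ) :=
    stdWeight N ‖ζ‖ * ((1 - ‖z‖) / (1 - ‖ζ‖)) ^ a / ‖1 - conj z * ζ‖ ^ (N + 2)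
  have hmeas : Measurable (F α) := by fun_prop
  calc ∫⁻ ζ in unitDisc,
        ENNReal.ofReal (‖bKer (stdWeight N) z ζ‖ * stdWeight N ‖ζ‖ / tl ν ‖ζ‖)
      ≤ ∫⁻ ζ in unitDisc, ENNReal.ofReal (A / tl ν ‖z‖) *
          (ENNReal.ofReal (F α ζ) + ENNReal.ofReal (F N ζ)) := by
        refine setLIntegral_mono' measurableSet_unitDisc fun ζ hζ => ?_
        refine (ENNReal.ofReal_le_ofReal (hker z hz ζ hζ)).trans ?_
        rw [ENNReal.ofReal_mul (by positivity)]
        gcongr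
        exact ENNReal.ofReal_add_le
    _ ≤ ENNReal.ofReal (A / tl ν ‖z‖) * (ENNReal.ofReal (I α) + ENNReal.ofReal (I N)) := by
        rw [lintegral_const_mul' _ _ ENNReal.ofReal_ne_top,
          lintegral_add_left hmeas.ennreal_ofReal]
        gcongr
        · exact lintegral_stdWeight_mul_rpow_div_norm_pow_le hα (hα1.trans hN1) hz
        · exact lintegral_stdWeight_mul_rpow_div_norm_pow_le hNpos le_rfl hz
    _ = ENNReal.ofReal (A * (I α + I N) / tl ν ‖z‖) := by
        rw [← ENNReal.ofReal_add (by positivity) (by positivity),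
          ← ENNReal.ofReal_mul (by positivity), div_mul_eq_mul_div]

end StandardWeight

section TestFunction

variable {ω v : ℝ → ℝ}

/-- The test function `-i arg z / v(|z|)` for the necessity of `Ď`: it lies in `L^∞_v`, while the
analytic part of the bounded function `-i arg z` is the unbounded function `-log(1 + z)`. -/
def argTest (v : ℝ → ℝ) (z : ℂ) : ℂ := -I * Complex.arg z / v ‖z‖

lemma aestronglyMeasurable_ofReal_comp_norm_inv (hvc : ContinuousOn v (Ico 0 1))
    (hv : ∀ s ∈ Ico (0 : ℝ) 1, 0 < v s) :
    AEStronglyMeasurable (fun z : ℂ => (v ‖z‖ : ℂ)⁻¹) (volume.restrict unitDisc) := by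
  have hcomp : ContinuousOn (fun z : ℂ => (v ‖z‖ : ℂ)) unitDisc :=
    Complex.continuous_ofReal.comp_continuousOn
      (hvc.comp continuous_norm.continuousOn fun z hz => norm_mem_Ico_of_mem_unitDisc hz)
  refine (hcomp.inv₀ fun z hz => ?_).aestronglyMeasurable measurableSet_unitDisc
  exact_mod_cast (hv _ (norm_mem_Ico_of_mem_unitDisc hz)).ne'

lemma aestronglyMeasurable_argTest (hvc : ContinuousOn v (Ico 0 1))
    (hv : ∀ s ∈ Ico (0 : ℝ) 1, 0 < v s) :
    AEStronglyMeasurable (argTest v) (volume.restrict unitDisc) :=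
  (by fun_prop : Measurable fun z : ℂ => -I * Complex.arg z).aestronglyMeasurable.mul
    (aestronglyMeasurable_ofReal_comp_norm_inv hvc hv)

lemma wSup_ofReal_comp_norm_inv_le (hv : ∀ s ∈ Ico (0 : ℝ) 1, 0 < v s) :
    wSup v (fun z => (v ‖z‖ : ℂ)⁻¹) ≤ ENNReal.ofReal 1 := by
  refine wSup_le_ofReal fun z hz => ?_
  have hvz := hv _ (norm_mem_Ico_of_mem_unitDisc hz)
  rw [norm_inv, Complex.norm_real, Real.norm_of_nonneg hvz.le, inv_mul_cancel₀ hvz.ne']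

lemma wSup_argTest_le (hv : ∀ s ∈ Ico (0 : ℝ) 1, 0 < v s) :
    wSup v (argTest v) ≤ ENNReal.ofReal π := by
  refine wSup_le_ofReal fun z hz => ?_
  have hvz := hv _ (norm_mem_Ico_of_mem_unitDisc hz)
  rw [argTest, norm_div, norm_mul, norm_neg, Complex.norm_I, one_mul, Complex.norm_real,
    Complex.norm_real, Real.norm_of_nonneg hvz.le, div_mul_cancel₀ _ hvz.ne']
  exact Complex.abs_arg_le_pi z

lemma integral_ofReal_mul_exp_neg_mul {n : ℕ} (hn : n ≠ 0) :
    ∫ θ in -π..π, (-I * θ) * Complex.exp (-(n * I) * θ) = 2 * π * ((-1) ^ n / n) := by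
  have hn0 : (n : ℂ) ≠ 0 := mod_cast hn
  have hderiv : ∀ x ∈ uIcc (-π) π, HasDerivAt
      (fun θ : ℝ => ((θ : ℂ) / n - I / n ^ 2) * Complex.exp (-(n * I) * θ))
      ((-I * x) * Complex.exp (-(n * I) * x)) x := by
    intro x _
    have hid : HasDerivAt (fun θ : ℝ => (θ : ℂ)) 1 x := (hasDerivAt_id x).ofReal_comp
    refine (((hid.div_const (n : ℂ)).sub_const (I / n ^ 2)).mul
      (hid.const_mul (-(n * I))).cexp).congr_deriv ?_
    field_simp
    ring_nf
    simp only [Complex.I_sq]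
    ring
  have hexp_pi : Complex.exp (-(n * I) * π) = (-1) ^ n := by
    rw [show -(n * I) * (π : ℂ) = n * (-(π * I)) by ring, Complex.exp_nat_mul, Complex.exp_neg,
      Complex.exp_pi_mul_I, inv_neg, inv_one]
  have hexp_neg_pi : Complex.exp (-(n * I) * (-π : ℝ)) = (-1) ^ n := by
    rw [show -(n * I) * ((-π : ℝ) : ℂ) = n * (π * I) by push_cast; ring, Complex.exp_nat_mul,
      Complex.exp_pi_mul_I]
  rw [intervalIntegral.integral_eq_sub_of_hasDerivAt hderiv
    (Continuous.intervalIntegrable (by fun_prop) _ _), hexp_pi, hexp_neg_pi]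
  push_cast
  ring

-- For `n = 0` the right-hand side is `0` because `1 / 0 = 0`.
lemma integral_ofReal_mul_conj_circleMap_pow (n : ℕ) :
    ∫ θ in Ioo (-π) π, (-I * θ) * conj (circleMap 0 1 θ) ^ n = 2 * π * ((-1) ^ n / n) := by
  have hexp (θ : ℝ) : conj (circleMap 0 1 θ) ^ n = Complex.exp (-(n * I) * θ) := by
    rw [circleMap_zero, Complex.ofReal_one, one_mul, ← Complex.exp_conj, ← Complex.exp_nat_mul,
      map_mul, Complex.conj_ofReal, Complex.conj_I]
    congr 1
    ring
  simp_rw [hexp]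
  rw [← integral_Ioc_eq_integral_Ioo,
    ← intervalIntegral.integral_of_le (by linarith [Real.pi_pos])]
  rcases eq_or_ne n 0 with rfl | hn
  · have hodd : ∫ θ in -π..π, (θ : ℂ) = 0 := by
      rw [intervalIntegral.integral_ofReal, integral_id]
      simp
    simp [hodd]
  · exact integral_ofReal_mul_exp_neg_mul hn

lemma bProjCoeff_argTest (ω v : ℝ → ℝ) (n : ℕ) :
    bProjCoeff ω (argTest v) n = (-1) ^ n / n *
      (mom (fun s => ω s / v s) ((n : ℝ) + 1) / mom ω (2 * (n : ℝ) + 1) : ℝ) := by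
  have hradial : (mom (fun s => ω s / v s) ((n : ℝ) + 1) : ℂ) =
      ∫ s in Ioo (0 : ℝ) 1, (s : ℂ) ^ (n + 1) * (ω s / v s : ℝ) := by
    rw [mom_eq_setIntegral, ← integral_complex_ofReal]
    refine setIntegral_congr_fun measurableSet_Ioo fun s _ => ?_
    rw [← Nat.cast_add_one, Real.rpow_natCast]
    push_cast
    ring
  have hfactor (ζ : ℂ) : argTest v ζ * ω ‖ζ‖ * conj ζ ^ n =
      (-I * Complex.arg ζ) * (ω ‖ζ‖ / v ‖ζ‖ : ℝ) * conj ζ ^ n := by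
    rw [argTest]
    push_cast
    ring
  have hpi : (π : ℂ) ≠ 0 := mod_cast Real.pi_ne_zero
  simp_rw [bProjCoeff, hfactor]
  rw [integral_unitDisc_arg_mul_norm_mul_conj_pow (fun θ => -I * θ) (fun s => (ω s / v s : ℝ)),
    ← hradial, integral_ofReal_mul_conj_circleMap_pow]
  push_cast
  field_simp

lemma IsRadialWeight.hasSum_re_bProj_argTest_neg (hω : IsRadialWeight ω)
    (hint : IntegrableOn (fun ζ => argTest v ζ * ω ‖ζ‖) unitDisc) {r : ℝ}
    (hr : -(r : ℂ) ∈ unitDisc) :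
    HasSum (fun n : ℕ => r ^ n / n *
        (mom (fun s => ω s / v s) ((n : ℝ) + 1) / mom ω (2 * (n : ℝ) + 1)))
      (bProj ω (argTest v) (-r)).re := by
  refine (Complex.hasSum_re (hω.hasSum_bProj hint hr)).congr_fun fun n => ?_
  have hsign : ((-1 : ℂ) ^ n) * (-1) ^ n = 1 := by rw [← mul_pow]; norm_num
  rw [bProjCoeff_argTest, neg_pow, ← Complex.ofReal_re (r ^ n / n * _)]
  congr 1
  push_cast
  linear_combination (-(r : ℂ) ^ n / n * (mom (fun s => ω s / v s) ((n : ℝ) + 1) /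
    mom ω (2 * (n : ℝ) + 1))) * hsign

lemma ProjBddH.exists_norm_bProj_mul_le (hP : ProjBddH ω v) (hω : IsRadialWeight ω)
    (hvc : ContinuousOn v (Ico 0 1)) :
    ∃ C : ℝ, 0 < C ∧ ∀ (f : ℂ → ℂ) (M : ℝ), AEStronglyMeasurable f (volume.restrict unitDisc) →
      0 ≤ M → wSup v f ≤ ENNReal.ofReal M →
      IntegrableOn (fun ζ => f ζ * ω ‖ζ‖) unitDisc ∧
        ∀ z ∈ unitDisc, ‖bProj ω f z‖ * v ‖z‖ ≤ C * M := by
  obtain ⟨C, hC, hP⟩ := hP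
  refine ⟨C, hC, fun f M hf hM hfM => ?_⟩
  obtain ⟨hint, hdiff, hbound⟩ := hP f hf (hfM.trans_lt ENNReal.ofReal_lt_top)
  refine ⟨hω.integrableOn_mul_of_bInt (hint 0 (mem_unitDisc.2 (by simp))), fun z hz =>
    norm_mul_le_of_wSup_le hdiff.continuousOn hvc (mul_nonneg hC.le hM) ?_ hz⟩
  rw [ENNReal.ofReal_mul hC.le]
  exact hbound.trans (by gcongr)

lemma ProjBddH.integrableOn_mul_div (hP : ProjBddH ω v) (hω : IsRadialWeight ω)
    (hvc : ContinuousOn v (Ico 0 1)) (hv : ∀ s ∈ Ico (0 : ℝ) 1, 0 < v s) :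
    IntegrableOn (fun s => s * (ω s / v s)) (Ioo 0 1) := by
  obtain ⟨C, -, hC⟩ := hP.exists_norm_bProj_mul_le hω hvc
  have hint := (hC _ 1 (aestronglyMeasurable_ofReal_comp_norm_inv hvc hv) zero_le_one
    (wSup_ofReal_comp_norm_inv_le hv)).1
  have hreal : IntegrableOn (fun ζ : ℂ => ω ‖ζ‖ / v ‖ζ‖) unitDisc :=
    hint.re.congr (.of_forall fun ζ => by
      simp only [← Complex.ofReal_inv, ← Complex.ofReal_mul, RCLike.re_eq_complex_re,
        Complex.ofReal_re]
      ring)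
  simpa using (integrableOn_fun_norm_addHaar (μ := volume) (f := fun s => ω s / v s)).1 hreal

lemma IsRadialWeight.mom_le_mul_mom_div (hω : IsRadialWeight ω)
    (hv : ∀ s ∈ Ico (0 : ℝ) 1, 0 < v s)
    (hint : IntegrableOn (fun s => s * (ω s / v s)) (Ioo 0 1)) {n : ℕ} {B : ℝ}
    (hB : ∀ s ∈ Ioo (0 : ℝ) 1, s ^ n * v s ≤ B) :
    mom ω (2 * (n : ℝ) + 1) ≤ B * mom (fun s => ω s / v s) ((n : ℝ) + 1) := by
  have hsplit : ∀ s ∈ Ioo (0 : ℝ) 1,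
      s ^ (n : ℝ) * (s * (ω s / v s)) = s ^ ((n : ℝ) + 1) * (ω s / v s) := fun s hs => by
    rw [Real.rpow_add_one hs.1.ne', mul_assoc]
  have hintn : IntegrableOn (fun s => s ^ ((n : ℝ) + 1) * (ω s / v s)) (Ioo 0 1) :=
    (integrableOn_rpow_mul n.cast_nonneg hint).congr_fun hsplit measurableSet_Ioo
  rw [mom_eq_setIntegral, mom_eq_setIntegral, ← integral_const_mul]
  refine setIntegral_mono_on (integrableOn_rpow_mul (by positivity) hω.integrableOn_Ioo)
    (hintn.const_mul B) measurableSet_Ioo fun s hs => ?_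
  have hvs := hv s (Ioo_subset_Ico_self hs)
  have hωs := hω.1 s (Ioo_subset_Ico_self hs)
  have hs0 := hs.1
  calc s ^ (2 * (n : ℝ) + 1) * ω s
      = s ^ n * v s * (s ^ ((n : ℝ) + 1) * (ω s / v s)) := by
        rw [two_mul, add_assoc, Real.rpow_add hs0, Real.rpow_natCast]
        field_simp
    _ ≤ B * (s ^ ((n : ℝ) + 1) * (ω s / v s)) := by
        gcongr
        exact hB s hs

end TestFunction

section Necessity

variable {ω ν : ℝ → ℝ}

lemma pow_mul_pow_le_factorial {s : ℝ} (hs : s ∈ Icc (0 : ℝ) 1) (m n : ℕ) :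
    s ^ n * (n * (1 - s)) ^ m ≤ m.factorial := by
  set x := n * (1 - s)
  have hx : 0 ≤ x := mul_nonneg n.cast_nonneg (sub_nonneg.2 hs.2)
  have hexp : s ^ n ≤ Real.exp (-x) := by
    calc s ^ n ≤ Real.exp (s - 1) ^ n :=
          pow_le_pow_left₀ hs.1 (by linarith [Real.add_one_le_exp (s - 1)]) n
      _ = Real.exp (-x) := by rw [← Real.exp_nat_mul]; congr 1; ring
  have hfact : x ^ m ≤ m.factorial * Real.exp x := by
    have := Real.pow_div_factorial_le_exp x hx m
    rwa [div_le_iff₀' (by positivity)] at this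
  calc s ^ n * x ^ m ≤ Real.exp (-x) * (m.factorial * Real.exp x) := by gcongr
    _ = m.factorial := by rw [mul_left_comm, ← Real.exp_add, neg_add_cancel, Real.exp_zero, mul_one]

lemma Dhat.exists_pow_mul_tl_le (hD : Dhat ν) (h : IsRadialWeight ν) :
    ∃ A : ℝ, 0 < A ∧ ∀ ρ ∈ Ico (0 : ℝ) 1, ∀ n : ℕ, 1 / (1 - ρ) ≤ n →
      ∀ s ∈ Ioo (0 : ℝ) 1, s ^ n * tl ν s ≤ A * tl ν ρ := by
  obtain ⟨m, -, hdoubling⟩ := hD.exists_tl_le_pow_mul h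
  refine ⟨2 ^ m * m.factorial, by positivity, fun ρ hρ n hn s hs => ?_⟩
  have htlρ : 0 < tl ν ρ := h.2.2 ρ hρ
  have hs1 : 0 < 1 - s := sub_pos.2 hs.2
  have hs0 := hs.1
  have hA : (1 : ℝ) ≤ 2 ^ m * m.factorial :=
    one_le_mul_of_one_le_of_one_le (one_le_pow₀ one_le_two) (mod_cast m.factorial_pos)
  rcases le_total ρ s with hρs | hsρ
  · calc s ^ n * tl ν s ≤ 1 * tl ν ρ := by
          gcongr
          · exact (h.2.2 s ⟨hs.1.le, hs.2⟩).le
          · exact pow_le_one₀ hs.1.le hs.2.le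
          · exact h.antitoneOn_tl (Ico_subset_Icc_self hρ) (Ioo_subset_Icc_self hs) hρs
      _ ≤ 2 ^ m * m.factorial * tl ν ρ := by gcongr
  · have hratio : (1 - s) / (1 - ρ) ≤ n * (1 - s) := by
      rw [div_eq_mul_one_div, mul_comm]
      gcongr
    have hratio0 : 0 ≤ (1 - s) / (1 - ρ) := div_nonneg hs1.le (sub_nonneg.2 hρ.2.le)
    calc s ^ n * tl ν s ≤ s ^ n * ((2 * ((1 - s) / (1 - ρ))) ^ m * tl ν ρ) := by
          gcongr
          exact hdoubling s ρ hs.1.le hsρ hρ.2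
      _ = 2 ^ m * (s ^ n * ((1 - s) / (1 - ρ)) ^ m) * tl ν ρ := by rw [mul_pow]; ring
      _ ≤ 2 ^ m * (s ^ n * (n * (1 - s)) ^ m) * tl ν ρ := by gcongr
      _ ≤ 2 ^ m * m.factorial * tl ν ρ := by
          gcongr
          exact pow_mul_pow_le_factorial (Ioo_subset_Icc_self hs) m n

lemma Dhat.exists_inv_mul_tl_le_mom_div_mom (hD : Dhat ν) (hν : IsRadialWeight ν)
    (hω : IsRadialWeight ω) (hint : IntegrableOn (fun s => s * (ω s / tl ν s)) (Ioo 0 1)) :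
    ∃ A : ℝ, 0 < A ∧ ∀ ρ ∈ Ico (0 : ℝ) 1, ∀ n : ℕ, 1 / (1 - ρ) ≤ n →
      (A * tl ν ρ)⁻¹ ≤ mom (fun s => ω s / tl ν s) ((n : ℝ) + 1) / mom ω (2 * (n : ℝ) + 1) := by
  obtain ⟨A, hA, hbound⟩ := hD.exists_pow_mul_tl_le hν
  refine ⟨A, hA, fun ρ hρ n hn => ?_⟩
  rw [le_div_iff₀ (hω.mom_odd_pos n), inv_mul_le_iff₀ (mul_pos hA (hν.2.2 ρ hρ))]
  exact hω.mom_le_mul_mom_div hν.2.2 hint (hbound ρ hρ n hn)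

lemma log_le_sum_Ico_inv {N L : ℕ} (hN : N ≠ 0) (hL : L ≠ 0) :
    Real.log L ≤ ∑ n ∈ Finset.Ico N (N * L), (n : ℝ)⁻¹ := by
  have hN0 : (0 : ℝ) < N := by positivity
  have hNL : N ≤ N * L := Nat.le_mul_of_pos_right N (Nat.pos_of_ne_zero hL)
  have hanti : AntitoneOn (fun x : ℝ => x⁻¹) (Icc N (N * L : ℕ)) := fun x hx y _ hxy =>
    inv_anti₀ (hN0.trans_le hx.1) hxy
  calc Real.log L = ∫ x in (N : ℝ)..(N * L : ℕ), x⁻¹ := by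
        rw [integral_inv_of_pos hN0 (by positivity), Nat.cast_mul, mul_div_cancel_left₀ _ hN0.ne']
    _ ≤ ∑ n ∈ Finset.Ico N (N * L), (n : ℝ)⁻¹ := hanti.integral_le_sum_Ico hNL

lemma one_half_le_one_sub_pow {x : ℝ} {n : ℕ} (hx : x ≤ 1) (hnx : n * x ≤ 1 / 2) :
    1 / 2 ≤ (1 - x) ^ n := by
  have := one_add_mul_le_pow (a := -x) (by linarith) n
  rw [← sub_eq_add_neg] at this
  linarith

lemma mul_log_le_of_hasSum {c : ℕ → ℝ} (hc : ∀ n, 0 ≤ c n) {η κ S : ℝ} (hη : η ∈ Ioc (0 : ℝ) 1)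
    (hκ : 0 ≤ κ) (hκc : ∀ n : ℕ, 1 / η ≤ n → κ ≤ c n) {L : ℕ} (hL : L ≠ 0)
    (hS : HasSum (fun n : ℕ => (1 - η / (4 * L)) ^ n / n * c n) S) :
    κ * Real.log L ≤ 2 * S := by
  have hη0 := hη.1
  have hL1 : (1 : ℝ) ≤ L := mod_cast Nat.one_le_iff_ne_zero.2 hL
  have hgap : η / (4 * L) ≤ 1 := by rw [div_le_one (by positivity)]; linarith [hη.2]
  have hη1 : 1 ≤ 1 / η := (one_le_div hη0).2 hη.2
  set N := ⌈1 / η⌉₊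
  have hηN : 1 / η ≤ N := Nat.le_ceil _
  have hN2 : (N : ℝ) ≤ 2 / η := by
    rw [← one_add_one_eq_two, add_div]
    linarith [Nat.ceil_lt_add_one (zero_le_one.trans hη1)]
  have hN : N ≠ 0 := (Nat.ceil_pos.2 (one_pos.trans_le hη1)).ne'
  have hterm : ∀ n ∈ Finset.Ico N (N * L),
      κ / 2 * (n : ℝ)⁻¹ ≤ (1 - η / (4 * L)) ^ n / n * c n := by
    intro n hn
    obtain ⟨hNn, hnNL⟩ := Finset.mem_Ico.1 hn
    have hhalf : 1 / 2 ≤ (1 - η / (4 * L)) ^ n := one_half_le_one_sub_pow hgap <| by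
      calc n * (η / (4 * L)) ≤ 2 / η * L * (η / (4 * L)) := by
            gcongr
            calc (n : ℝ) ≤ N * L := mod_cast hnNL.le
              _ ≤ 2 / η * L := by gcongr
        _ = 1 / 2 := by field_simp; norm_num
    have hκn : κ ≤ c n := hκc n (hηN.trans (mod_cast hNn))
    calc κ / 2 * (n : ℝ)⁻¹ = 1 / 2 / n * κ := by ring
      _ ≤ (1 - η / (4 * L)) ^ n / n * c n := by gcongr
  have hnonneg (n : ℕ) : 0 ≤ (1 - η / (4 * L)) ^ n / n * c n :=
    mul_nonneg (div_nonneg (pow_nonneg (sub_nonneg.2 hgap) n) n.cast_nonneg) (hc n)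
  have hsum : κ / 2 * Real.log L ≤ S := by
    calc κ / 2 * Real.log L ≤ κ / 2 * ∑ n ∈ Finset.Ico N (N * L), (n : ℝ)⁻¹ := by
          gcongr
          exact log_le_sum_Ico_inv hN hL
      _ ≤ ∑ n ∈ Finset.Ico N (N * L), (1 - η / (4 * L)) ^ n / n * c n := by
          rw [Finset.mul_sum]
          exact Finset.sum_le_sum hterm
      _ ≤ S := sum_le_hasSum _ (fun n _ => hnonneg n) hS
  linarith

lemma one_sub_div_mem_Ico {ρ K : ℝ} (hρ : ρ ∈ Ico (0 : ℝ) 1) (hK : 1 ≤ K) :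
    1 - (1 - ρ) / K ∈ Ico (0 : ℝ) 1 := by
  have hρ1 : 0 < 1 - ρ := sub_pos.2 hρ.2
  have hle : (1 - ρ) / K ≤ 1 - ρ := div_le_self hρ1.le hK
  have hpos : 0 < (1 - ρ) / K := by positivity
  exact ⟨by linarith [hρ.1], by linarith⟩

lemma ProjBddH.exists_log_mul_tl_le (hP : ProjBddH ω (tl ν)) (hω : IsRadialWeight ω)
    (hν : IsRadialWeight ν) (hD : Dhat ν) :
    ∃ B : ℝ, 0 < B ∧ ∀ L : ℕ, L ≠ 0 → ∀ ρ ∈ Ico (0 : ℝ) 1,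
      Real.log L * tl ν (1 - (1 - ρ) / (4 * L)) ≤ B * tl ν ρ := by
  have hvc : ContinuousOn (tl ν) (Ico 0 1) := hν.continuousOn_tl.mono Ico_subset_Icc_self
  obtain ⟨A, hA, hratio⟩ := hD.exists_inv_mul_tl_le_mom_div_mom hν hω
    (hP.integrableOn_mul_div hω hvc hν.2.2)
  obtain ⟨C, hC, hbound⟩ := hP.exists_norm_bProj_mul_le hω hvc
  obtain ⟨hint, hnorm⟩ := hbound _ π (aestronglyMeasurable_argTest hvc hν.2.2) Real.pi_pos.le
    (wSup_argTest_le hν.2.2)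
  refine ⟨2 * A * (C * π), by positivity, fun L hL ρ hρ => ?_⟩
  have htlρ : 0 < tl ν ρ := hν.2.2 ρ hρ
  have hr : 1 - (1 - ρ) / (4 * L) ∈ Ico (0 : ℝ) 1 :=
    one_sub_div_mem_Ico hρ (mod_cast (by lia : 1 ≤ 4 * L))
  set r := 1 - (1 - ρ) / (4 * L)
  have hnormr : ‖-(r : ℂ)‖ = r := by rw [norm_neg, Complex.norm_real, Real.norm_of_nonneg hr.1]
  have hrdisc : -(r : ℂ) ∈ unitDisc := mem_unitDisc.2 (hnormr.trans_lt hr.2)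
  have hnonneg (n : ℕ) :
      0 ≤ mom (fun s => ω s / tl ν s) ((n : ℝ) + 1) / mom ω (2 * (n : ℝ) + 1) :=
    div_nonneg (mom_nonneg (fun s hs => div_nonneg (hω.1 s (Ioo_subset_Ico_self hs))
      (hν.2.2 s (Ioo_subset_Ico_self hs)).le) _) (hω.mom_odd_pos n).le
  have hlog : (A * tl ν ρ)⁻¹ * Real.log L ≤ 2 * ‖bProj ω (argTest (tl ν)) (-r)‖ :=
    (mul_log_le_of_hasSum hnonneg ⟨sub_pos.2 hρ.2, sub_le_self 1 hρ.1⟩ (by positivity)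
      (hratio ρ hρ) hL (hω.hasSum_re_bProj_argTest_neg hint hrdisc)).trans
      (mul_le_mul_of_nonneg_left (Complex.re_le_norm _) zero_le_two)
  rw [inv_mul_le_iff₀ (by positivity)] at hlog
  have hproj : ‖bProj ω (argTest (tl ν)) (-r)‖ * tl ν r ≤ C * π := by
    simpa only [hnormr] using hnorm _ hrdisc
  calc Real.log L * tl ν r ≤ A * tl ν ρ * (2 * ‖bProj ω (argTest (tl ν)) (-r)‖) * tl ν r :=
        mul_le_mul_of_nonneg_right hlog (hν.2.2 r hr).le
    _ = 2 * A * tl ν ρ * (‖bProj ω (argTest (tl ν)) (-r)‖ * tl ν r) := by ring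
    _ ≤ 2 * A * tl ν ρ * (C * π) := by gcongr
    _ = 2 * A * (C * π) * tl ν ρ := by ring

theorem ProjBddH.dcheck (hP : ProjBddH ω (tl ν)) (hω : IsRadialWeight ω) (hν : IsRadialWeight ν)
    (hD : Dhat ν) : Dcheck ν := by
  obtain ⟨B, hB, hlog⟩ := hP.exists_log_mul_tl_le hω hν hD
  obtain ⟨L, hL⟩ := exists_nat_gt (Real.exp (2 * B))
  have hL1 : (1 : ℝ) < L := (Real.one_lt_exp_iff.2 (by positivity)).trans hL
  have hlogL : B * 2 ≤ Real.log L :=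
    mul_comm B 2 ▸ (Real.le_log_iff_exp_le (by positivity)).2 hL.le
  refine ⟨4 * L, 2, by linarith, one_lt_two, fun ρ hρ => le_of_mul_le_mul_left ?_ hB⟩
  have htl := hν.2.2 _ (one_sub_div_mem_Ico hρ (by linarith : 1 ≤ 4 * (L : ℝ)))
  calc B * (2 * tl ν (1 - (1 - ρ) / (4 * L)))
      ≤ Real.log L * tl ν (1 - (1 - ρ) / (4 * L)) := by rw [← mul_assoc]; gcongr
    _ ≤ B * tl ν ρ := hlog L (mod_cast (one_pos.trans hL1).ne') ρ hρ

end Necessity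

end

/-- Corollary: for `ν ∈ D̂`, there exists a radial weight `ω` with
`P_ω : L^∞_ν̂ → H^∞_ν̂` bounded iff `ν ∈ Ď`; in particular, if `ν ∈ D̂ \ Ď`,
no radial weight `ω` gives a bounded projection. -/
theorem stmt1 (ν : ℝ → ℝ) (hν : IsRadialWeight ν) (hνD : Dhat ν) :
    ((∃ ω : ℝ → ℝ, IsRadialWeight ω ∧ ProjBddH ω (tl ν)) ↔ Dcheck ν) ∧
    (¬ Dcheck ν → ∀ ω : ℝ → ℝ, IsRadialWeight ω → ¬ ProjBddH ω (tl ν)) := by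
  refine ⟨⟨?_, fun hc => DD.exists_projBddH ⟨hνD, hc⟩ hν⟩,
    fun hc ω hω hP => hc (hP.dcheck hω hν hνD)⟩
  rintro ⟨ω, hω, hP⟩
  exact hP.dcheck hω hν hνD
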